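/- Let K be an infinite field, S = K[x_1,...,x_n], and fix an integer j. Let I ⊆ S and J ⊆ S be homogeneous ideals and let w, w' ∈ Z_{≥0}^n be weight vectors. Then for a general change of coordinates g ∈ GL_n(K), one has dim_K Tor_i^S(S/I, S/g(J))_j ≤ dim_K Tor_i^S(S/in_w(I), S/in_{w'}(J))_j for all i ≥ 0. -/

import Mathlib

open MvPolynomial TensorProduct CategoryTheory

noncomputable section

/-- The polynomial ring `S = K[x_1,...,x_n]`, standard graded. -/
abbrev PS (K : Type) [Field K] (n : ℕ) : Type := MvPolynomial (Fin n) K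

variable (K : Type) [Field K] (n : ℕ)

/-- An ideal of `S` is homogeneous if it contains all homogeneous components of its
elements. -/
def IsHomog (I : Ideal (PS K n)) : Prop :=
  ∀ f ∈ I, ∀ d : ℕ, MvPolynomial.homogeneousComponent d f ∈ I

/-- The change of coordinates of `S` induced by `g ∈ GL_n(K)`, determined by
`g(x_i) = ∑_j g_{ji} x_j`. -/
def coordChange (g : GL (Fin n) K) : PS K n →ₐ[K] PS K n :=
  MvPolynomial.aeval (fun i => ∑ j, ((g : Matrix (Fin n) (Fin n) K) j i) • MvPolynomial.X j)

/-- A property `P` holds for a general change of coordinates `g ∈ GL_n(K)` if there is a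
nonempty Zariski open subset `U ⊆ GL_n(K)` on which it holds; equivalently (as `GL_n(K)` is
an irreducible variety over the infinite field `K`) there is a nonzero polynomial `F` in the
matrix entries such that `P g` holds whenever `F` does not vanish at `g`. -/
def generally (P : GL (Fin n) K → Prop) : Prop :=
  ∃ F : MvPolynomial (Fin n × Fin n) K, F ≠ 0 ∧
    ∀ g : GL (Fin n) K,
      MvPolynomial.eval (fun p => (g : Matrix (Fin n) (Fin n) K) p.1 p.2) F ≠ 0 → P g

/-- The standard grading of `S = K[x_1,...,x_n]`, extended to `ℤ` (zero in negative
degrees). -/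
def polyGrade (d : ℤ) : Submodule K (PS K n) :=
  if 0 ≤ d then homogeneousSubmodule (Fin n) K d.toNat else ⊥

/-- The degree `d` component of the (internal) tensor-product grading on `A ⊗[K] B`. -/
def tensorGrade {A B : Type} [AddCommGroup A] [Module K A] [AddCommGroup B] [Module K B]
    (GA : ℤ → Submodule K A) (GB : ℤ → Submodule K B) (d : ℤ) :
    Submodule K (A ⊗[K] B) :=
  ⨆ p : ℤ, LinearMap.range (TensorProduct.map (GA p).subtype (GB (d - p)).subtype)

variable (N : Type) [AddCommGroup N] [Module K N] [Module (PS K n) N]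
  [IsScalarTower K (PS K n) N]

/-- The tower of `K`-vector spaces `D_i = S^{⊗ i} ⊗_K N` appearing in the bar complex
`M ⊗_K S^{⊗ i} ⊗_K N`, which computes `Tor^S_i(M, N)`. -/
def barD : ℕ → ModuleCat K
  | 0 => ModuleCat.of K N
  | (i + 1) => ModuleCat.of K (PS K n ⊗[K] (barD i))

/-- The internal `ℤ`-grading on `D_i = S^{⊗ i} ⊗_K N` induced by the standard grading of
`S` and a grading `GN` of `N`. -/
def barDGrade (GN : ℤ → Submodule K N) : (i : ℕ) → ℤ → Submodule K (barD K n N i)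
  | 0 => GN
  | (i + 1) => tensorGrade K (polyGrade K n) (barDGrade GN i)

/-- Scalar multiplication `S → N → N` as a `K`-bilinear map. -/
def smulBilin : PS K n →ₗ[K] N →ₗ[K] N :=
  LinearMap.mk₂ K (fun s x => s • x)
    (fun s₁ s₂ x => add_smul s₁ s₂ x)
    (fun c s x => smul_assoc c s x)
    (fun s x y => smul_add s x y)
    (fun c s x => (smul_comm c s x).symm)

/-- The "contraction" part of the bar differential, `c_i : D_{i+1} → D_i`, defined
recursively by `c_0(s ⊗ x) = s • x` and
`c_{i+1}(s ⊗ s' ⊗ t) = (s s') ⊗ t - s ⊗ c_i(s' ⊗ t)`. -/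
def barC : (i : ℕ) → ((barD K n N (i + 1)) →ₗ[K] (barD K n N i))
  | 0 => TensorProduct.lift (smulBilin K n N)
  | (i + 1) =>
      (TensorProduct.map (LinearMap.mul' K (PS K n)) LinearMap.id).comp
        (TensorProduct.assoc K (PS K n) (PS K n) (barD K n N i)).symm.toLinearMap
      - TensorProduct.map LinearMap.id (barC i)

variable (M : Type) [AddCommGroup M] [Module K M] [Module (PS K n) M]
  [IsScalarTower K (PS K n) M]

/-- Right scalar multiplication `M ⊗[K] S → M` as a `K`-linear map. -/
def smulMapM : M ⊗[K] PS K n →ₗ[K] M :=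
  TensorProduct.lift (LinearMap.mk₂ K (fun m s => s • m)
    (fun m₁ m₂ s => smul_add s m₁ m₂)
    (fun c m s => smul_comm s c m)
    (fun m s₁ s₂ => add_smul s₁ s₂ m)
    (fun c m s => smul_assoc c s m))

/-- The bar differential `b_i : M ⊗ D_{i+1} → M ⊗ D_i`,
`b(m ⊗ s ⊗ t) = (s • m) ⊗ t - m ⊗ c_i(s ⊗ t)`.  The complex
`⋯ → M ⊗_K S^{⊗ i} ⊗_K N → ⋯ → M ⊗_K S ⊗_K N → M ⊗_K N → 0`
is the bar complex `M ⊗_S Bar(S, N)`, whose `i`-th homology is `Tor^S_i(M, N)`;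
it is a complex of graded vector spaces with degree-preserving differentials. -/
def barB (i : ℕ) : (M ⊗[K] (barD K n N (i + 1))) →ₗ[K] (M ⊗[K] (barD K n N i)) :=
  (TensorProduct.map (smulMapM K n M) LinearMap.id).comp
      (TensorProduct.assoc K M (PS K n) (barD K n N i)).symm.toLinearMap
  - TensorProduct.map LinearMap.id (barC K n N i)

/-- `dim_K Tor_i^S(M, N)_j`, the dimension of the degree-`j` component of the graded module
`Tor_i^S(M, N)` for graded modules `M`, `N`: it is computed as the homology of the degree-`j`
strand of the bar complex, namely `dim (ker b_i)_j - dim (im b_{i+1})_j`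
(for `i = 0`, `dim (M ⊗_K N)_j - dim (im b_1)_j`). -/
def torStrandDim (GM : ℤ → Submodule K M) (GN : ℤ → Submodule K N) : ℕ → ℤ → ℕ
  | 0, j =>
      Module.finrank K ↥(tensorGrade K GM (barDGrade K n N GN 0) j) -
        Module.finrank K
          ↥(LinearMap.range (barB K n N M 0) ⊓ tensorGrade K GM (barDGrade K n N GN 0) j)
  | (i + 1), j =>
      Module.finrank K
          ↥(LinearMap.ker (barB K n N M i) ⊓
              tensorGrade K GM (barDGrade K n N GN (i + 1)) j) -
        Module.finrank K
          ↥(LinearMap.range (barB K n N M (i + 1)) ⊓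
              tensorGrade K GM (barDGrade K n N GN (i + 1)) j)

/-- The quotient grading on `S/J`. -/
def quotGrade (J : Ideal (PS K n)) : ℤ → Submodule K (PS K n ⧸ J) := fun d =>
  (polyGrade K n d).map (Ideal.Quotient.mkₐ K J).toLinearMap

/-- The grading on an ideal `I ⊆ S` viewed as an `S`-module. -/
def idealGrade (I : Ideal (PS K n)) : ℤ → Submodule K ↥I := fun d =>
  (polyGrade K n d).comap ((Submodule.subtype I).restrictScalars K)

/-- `dim_K Tor_i^S(S/I, S/J)_j`. -/
def torQQ (I J : Ideal (PS K n)) (i : ℕ) (j : ℤ) : ℕ :=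
  torStrandDim K n (PS K n ⧸ J) (PS K n ⧸ I) (quotGrade K n I) (quotGrade K n J) i j

/-- `dim_K Tor_i^S(I, S/J)_j`. -/
def torIQ (I J : Ideal (PS K n)) (i : ℕ) (j : ℤ) : ℕ :=
  torStrandDim K n (PS K n ⧸ J) ↥I (idealGrade K n I) (quotGrade K n J) i j

/-- A property `P` holds for a general (nonzero) scalar `λ ∈ K` if it holds on a nonempty
Zariski open subset of `K`; equivalently, outside the zero set of some nonzero polynomial.
(Since `{0}` is Zariski closed, it is equivalent to quantify over `λ ∈ Kˣ`.) -/
def generallyScalar (P : Kˣ → Prop) : Prop :=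
  ∃ F : Polynomial K, F ≠ 0 ∧ ∀ l : Kˣ, Polynomial.eval (l : K) F ≠ 0 → P l

/-- The diagonal change of coordinates `D_{λ,w} : x_i ↦ λ^{-w_i} x_i`. -/
def diagCoord (w : Fin n → ℕ) (l : Kˣ) : PS K n →ₐ[K] PS K n :=
  MvPolynomial.aeval (fun i => (((l⁻¹ : Kˣ) : K) ^ (w i)) • MvPolynomial.X i)

/-- The `w`-weight of an exponent vector: `∑ w_i m_i`. -/
def wdeg (w : Fin n → ℕ) (m : Fin n →₀ ℕ) : ℕ := ∑ i, w i * m i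

/-- The initial form `in_w(f)`: the sum of the terms of `f` of maximal `w`-weight. -/
def initialForm (w : Fin n → ℕ) (f : PS K n) : PS K n :=
  ∑ m ∈ f.support.filter (fun m => wdeg n w m = f.support.sup (wdeg n w)),
    MvPolynomial.monomial m (MvPolynomial.coeff m f)

/-- The initial ideal `in_w(I)` of `I` with respect to the weight order given by `w`. -/
def initialIdealW (w : Fin n → ℕ) (I : Ideal (PS K n)) : Ideal (PS K n) :=
  Ideal.span {g | ∃ f ∈ I, g = initialForm K n w f}

/-!
Put `V_i = S ⊗ D_i(S)`. The bar complex of `(S/I, S/J)` is the quotient of the complex `V` by a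
subcomplex `W(I, J)`, so in degree `j` the dimension of its `i`-th homology is a number depending
only on the Hilbert functions of `I` and `J`, minus the dimensions of the two subspaces
`b(V_{k+1}) + W_k(I, J)`, `k = i, i - 1`, of the fixed finite-dimensional spaces `(V_k)_j`. Along a
family of ideals with constant Hilbert function, whose elements extend to polynomial sections, the
dimensions of these subspaces are lower semicontinuous; hence the dimension of `Tor` is upper
semicontinuous. As `Tor_i` vanishes in degree `j < i`, only finitely many `i` matter.

This is applied twice. The torus orbits of `I` and `J` degenerate to `in_w(I)` and `in_{w'}(J)`,
so some translates `a(I)`, `b(J)` satisfy the inequality, and then so do `I` and `a⁻¹b(J)`.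
Finally, `g ↦ g(J)` is such a family over `GL_n(K)`, so a general `g` does at least as well as
`a⁻¹b`.
-/

section Grading

variable {K} {A B A' B' : Type} [AddCommGroup A] [Module K A] [AddCommGroup B] [Module K B]
  [AddCommGroup A'] [Module K A'] [AddCommGroup B'] [Module K B']

theorem finrank_map_add_finrank_ker_inf {V W : Type*} [AddCommGroup V] [Module K V]
    [AddCommGroup W] [Module K W] (f : V →ₗ[K] W) (U : Submodule K V)
    [FiniteDimensional K U] :
    Module.finrank K (U.map f) + Module.finrank K ↥(LinearMap.ker f ⊓ U) =
      Module.finrank K U := by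
  rw [← LinearMap.finrank_range_add_finrank_ker (f.domRestrict U), LinearMap.range_domRestrict,
    LinearMap.ker_domRestrict, (U.equivSubtypeMap _).finrank_eq, Submodule.map_comap_subtype,
    inf_comm]

theorem iSup_inf_eq_of_le {G U : ℤ → Submodule K A} (hG : iSupIndep G) (hU : ∀ d, U d ≤ G d)
    (d : ℤ) : (⨆ e, U e) ⊓ G d = U d := by
  have hdisj : (⨆ (e) (_ : e ≠ d), U e) ⊓ G d = ⊥ :=
    (((hG d).mono_right (iSup₂_mono fun e _ => hU e)).symm).eq_bot
  rw [iSup_split_single U d, sup_inf_assoc_of_le _ (hU d), hdisj, sup_bot_eq]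

theorem range_inf_eq_map {G : ℤ → Submodule K A} {G' : ℤ → Submodule K B} (hG : ⨆ d, G d = ⊤)
    (hG' : iSupIndep G') {f : A →ₗ[K] B} (hf : ∀ d, (G d).map f ≤ G' d) (d : ℤ) :
    LinearMap.range f ⊓ G' d = (G d).map f := by
  rw [← iSup_inf_eq_of_le hG' hf d, ← Submodule.map_iSup, hG, Submodule.map_top]

/-- A subspace `U` is graded with respect to `G` if it is spanned by its elements that are
homogeneous for `G`. -/
def IsGradedSubspace (G : ℤ → Submodule K A) (U : Submodule K A) : Prop :=
  U = ⨆ d, U ⊓ G d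

theorem isGradedSubspace_of_eq_iSup {G U : ℤ → Submodule K A} {V : Submodule K A}
    (hU : ∀ d, U d ≤ G d) (hV : V = ⨆ d, U d) : IsGradedSubspace G V :=
  le_antisymm (hV.le.trans <| iSup_mono fun d => le_inf (hV ▸ le_iSup U d) (hU d))
    (iSup_le fun _ => inf_le_left)

theorem isInternal_map_of_surjective {G : ℤ → Submodule K A} (hG : DirectSum.IsInternal G)
    {f : A →ₗ[K] B} (hf : Function.Surjective f)
    (hker : IsGradedSubspace G (LinearMap.ker f)) :
    DirectSum.IsInternal fun d => (G d).map f := by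
  refine (DirectSum.isInternal_submodule_iff_iSupIndep_and_iSup_eq_top _).2
    ⟨fun d => Submodule.disjoint_def.2 ?_, ?_⟩
  · simp only [← Submodule.map_iSup]
    rintro _ ⟨a, ha, rfl⟩ ⟨b, hb, hab⟩
    have hsub : a - b ∈ LinearMap.ker f := by simp [hab]
    rw [hker, iSup_split_single _ d] at hsub
    obtain ⟨u, hu, v, hv, huv⟩ := Submodule.mem_sup.1 hsub
    have hv' : v ∈ ⨆ (e) (_ : e ≠ d), G e :=
      (iSup₂_mono fun e _ => inf_le_right : _ ≤ ⨆ (e) (_ : e ≠ d), G e) hv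
    have hau : a - u = 0 := Submodule.disjoint_def.1 (hG.submodule_iSupIndep d) _
      (sub_mem ha hu.2) (by
        rw [show a - u = b + v by rw [sub_eq_iff_eq_add, add_right_comm, add_assoc, huv]; abel]
        exact add_mem hb hv')
    rw [sub_eq_zero.1 hau]
    exact hu.1
  · rw [← Submodule.map_iSup, hG.submodule_iSup_eq_top, Submodule.map_top,
      LinearMap.range_eq_top.2 hf]

theorem isInternal_span_image {ι : Type} (e : Module.Basis ι K A) (deg : ι → ℤ) :
    DirectSum.IsInternal fun d => Submodule.span K (e '' (deg ⁻¹' {d})) := by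
  refine (DirectSum.isInternal_submodule_iff_iSupIndep_and_iSup_eq_top _).2 ⟨fun d => ?_, ?_⟩
  · simp only [← Submodule.span_iUnion₂, ← Set.image_iUnion₂]
    refine e.linearIndependent.disjoint_span_image (Set.disjoint_left.2 fun i hi hi' => ?_)
    obtain ⟨d', hd', rfl⟩ := Set.mem_iUnion₂.1 hi'
    exact hd' hi
  · rw [← Submodule.span_iUnion, ← Set.image_iUnion, ← Set.preimage_iUnion,
      Set.iUnion_of_singleton, Set.preimage_univ, Set.image_univ, e.span_eq]

theorem span_collectedBasis_image {G : ℤ → Submodule K A} (hG : DirectSum.IsInternal G)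
    {ι : ℤ → Type} (v : ∀ d, Module.Basis (ι d) K (G d)) (d : ℤ) :
    Submodule.span K (hG.collectedBasis v '' (Sigma.fst ⁻¹' {d})) = G d := by
  have himage : hG.collectedBasis v '' (Sigma.fst ⁻¹' {d}) = (G d).subtype '' Set.range (v d) := by
    rw [hG.collectedBasis_coe, ← Set.range_comp]
    ext x
    constructor
    · rintro ⟨⟨_, k⟩, rfl, rfl⟩
      exact ⟨k, rfl⟩
    · rintro ⟨k, rfl⟩
      exact ⟨⟨d, k⟩, rfl, rfl⟩
  rw [himage, ← Submodule.map_span, (v d).span_eq, Submodule.map_top, Submodule.range_subtype]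

theorem exists_basis_of_isInternal {G : ℤ → Submodule K A} (hG : DirectSum.IsInternal G) :
    ∃ (ι : Type) (e : Module.Basis ι K A) (deg : ι → ℤ),
      ∀ d, Submodule.span K (e '' (deg ⁻¹' {d})) = G d :=
  ⟨_, _, _, span_collectedBasis_image hG fun d => Module.Basis.ofVectorSpace K (G d)⟩

theorem exists_linearEquiv_map_eq {G : ℤ → Submodule K A} {G' : ℤ → Submodule K A'}
    (hG : DirectSum.IsInternal G) (hG' : DirectSum.IsInternal G')
    [∀ d, FiniteDimensional K (G d)] [∀ d, FiniteDimensional K (G' d)]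
    (h : ∀ d, Module.finrank K (G d) = Module.finrank K (G' d)) :
    ∃ e : A ≃ₗ[K] A', ∀ d, (G d).map e.toLinearMap = G' d := by
  let b := hG.collectedBasis fun d => Module.finBasis K (G d)
  let b' := hG'.collectedBasis fun d => Module.finBasisOfFinrankEq K (G' d) (h d).symm
  have hbb' : ⇑(b.equiv b' (Equiv.refl _)) ∘ b = b' := funext fun i => by simp
  refine ⟨b.equiv b' (Equiv.refl _), fun d => ?_⟩
  rw [← span_collectedBasis_image hG fun d => Module.finBasis K (G d), Submodule.map_span,
    LinearEquiv.coe_coe, ← Set.image_comp, hbb', span_collectedBasis_image]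

/-- A `ℤ`-grading by finite-dimensional subspaces that vanish in negative degrees. -/
structure IsNonnegGrading (G : ℤ → Submodule K A) : Prop where
  isInternal : DirectSum.IsInternal G
  eq_bot_of_neg : ∀ d < 0, G d = ⊥
  finiteDimensional : ∀ d, FiniteDimensional K (G d)

theorem IsNonnegGrading.map_of_surjective {G : ℤ → Submodule K A} (hG : IsNonnegGrading G)
    {f : A →ₗ[K] B} (hf : Function.Surjective f)
    (hker : IsGradedSubspace G (LinearMap.ker f)) : IsNonnegGrading fun d => (G d).map f where
  isInternal := isInternal_map_of_surjective hG.isInternal hf hker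
  eq_bot_of_neg d hd := by rw [hG.eq_bot_of_neg d hd, Submodule.map_bot]
  finiteDimensional d := by
    have := hG.finiteDimensional d
    infer_instance

theorem tensorGrade_eq_iSup_map₂ (GA : ℤ → Submodule K A) (GB : ℤ → Submodule K B) (d : ℤ) :
    tensorGrade K GA GB d = ⨆ p, Submodule.map₂ (TensorProduct.mk K A B) (GA p) (GB (d - p)) :=
  iSup_congr fun p => by
    rw [TensorProduct.map₂_eq_range_lift_comp_mapIncl, TensorProduct.lift_mk, LinearMap.id_comp]

theorem tmul_mem_tensorGrade {GA : ℤ → Submodule K A} {GB : ℤ → Submodule K B} {p q d : ℤ}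
    (h : p + q = d) {a : A} {b : B} (ha : a ∈ GA p) (hb : b ∈ GB q) :
    a ⊗ₜ[K] b ∈ tensorGrade K GA GB d := by
  obtain rfl : q = d - p := by lia
  rw [tensorGrade_eq_iSup_map₂]
  exact Submodule.mem_iSup_of_mem p (Submodule.apply_mem_map₂ _ ha hb)

theorem tensorGrade_le {GA : ℤ → Submodule K A} {GB : ℤ → Submodule K B} {d : ℤ}
    {U : Submodule K (A ⊗[K] B)}
    (h : ∀ p q, p + q = d → ∀ a ∈ GA p, ∀ b ∈ GB q, a ⊗ₜ[K] b ∈ U) :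
    tensorGrade K GA GB d ≤ U := by
  rw [tensorGrade_eq_iSup_map₂]
  exact iSup_le fun p => Submodule.map₂_le.2 (h p (d - p) (by lia))

theorem tensorGrade_mono {GA GA' : ℤ → Submodule K A} {GB GB' : ℤ → Submodule K B}
    (h : ∀ d, GA d ≤ GA' d) (h' : ∀ d, GB d ≤ GB' d) (d : ℤ) :
    tensorGrade K GA GB d ≤ tensorGrade K GA' GB' d :=
  tensorGrade_le fun _ _ hpq _ ha _ hb => tmul_mem_tensorGrade hpq (h _ ha) (h' _ hb)

theorem map_tensorGrade (GA : ℤ → Submodule K A) (GB : ℤ → Submodule K B)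
    (f : A →ₗ[K] A') (g : B →ₗ[K] B') (d : ℤ) :
    (tensorGrade K GA GB d).map (TensorProduct.map f g) =
      tensorGrade K (fun p => (GA p).map f) (fun p => (GB p).map g) d := by
  apply le_antisymm
  · rw [Submodule.map_le_iff_le_comap]
    refine tensorGrade_le fun p q hpq a ha b hb => ?_
    rw [Submodule.mem_comap, TensorProduct.map_tmul]
    exact tmul_mem_tensorGrade hpq (Submodule.mem_map_of_mem ha) (Submodule.mem_map_of_mem hb)
  · refine tensorGrade_le ?_
    rintro p q hpq _ ⟨a, ha, rfl⟩ _ ⟨b, hb, rfl⟩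
    exact ⟨a ⊗ₜ b, tmul_mem_tensorGrade hpq ha hb, TensorProduct.map_tmul f g a b⟩

theorem map₂_mk_iSup_le_iSup_tensorGrade (GA : ℤ → Submodule K A) (GB : ℤ → Submodule K B) :
    Submodule.map₂ (TensorProduct.mk K A B) (⨆ d, GA d) (⨆ d, GB d) ≤
      ⨆ d, tensorGrade K GA GB d := by
  simp only [Submodule.map₂_iSup_left, Submodule.map₂_iSup_right]
  exact iSup₂_le fun q p => Submodule.map₂_le.2 fun a ha b hb =>
    Submodule.mem_iSup_of_mem (p + q) (tmul_mem_tensorGrade rfl ha hb)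

theorem tensorGrade_eq_bot {GA : ℤ → Submodule K A} {GB : ℤ → Submodule K B} {a b d : ℤ}
    (ha : ∀ d < a, GA d = ⊥) (hb : ∀ d < b, GB d = ⊥) (hd : d < a + b) :
    tensorGrade K GA GB d = ⊥ := by
  rw [eq_bot_iff]
  refine tensorGrade_le fun p q hpq x hx y hy => ?_
  obtain hp | hq : p < a ∨ q < b := by lia
  · rw [ha p hp, Submodule.mem_bot] at hx
    simp [hx]
  · rw [hb q hq, Submodule.mem_bot] at hy
    simp [hy]

theorem isInternal_tensorGrade {GA : ℤ → Submodule K A} {GB : ℤ → Submodule K B}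
    (hA : DirectSum.IsInternal GA) (hB : DirectSum.IsInternal GB) :
    DirectSum.IsInternal (tensorGrade K GA GB) := by
  obtain ⟨ι, e, deg, he⟩ := exists_basis_of_isInternal hA
  obtain ⟨κ, f, deg', hf⟩ := exists_basis_of_isInternal hB
  convert! isInternal_span_image (e.tensorProduct f) fun x => deg x.1 + deg' x.2 using 2 with d
  rw [tensorGrade_eq_iSup_map₂]
  simp only [← he, ← hf, Submodule.map₂_span_span, ← Submodule.span_iUnion]
  congr 1
  ext x
  simp only [Set.mem_iUnion, Set.mem_image2, Set.mem_image, Set.mem_preimage,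
    Set.mem_singleton_iff]
  constructor
  · rintro ⟨p, _, ⟨i, rfl, rfl⟩, _, ⟨k, hk, rfl⟩, rfl⟩
    exact ⟨(i, k), by lia, e.tensorProduct_apply f i k⟩
  · rintro ⟨⟨i, k⟩, hik, rfl⟩
    exact ⟨deg i, _, ⟨i, rfl, rfl⟩, _, ⟨k, by lia, rfl⟩, (e.tensorProduct_apply f i k).symm⟩

theorem IsNonnegGrading.tensorGrade {GA : ℤ → Submodule K A} {GB : ℤ → Submodule K B}
    (hA : IsNonnegGrading GA) (hB : IsNonnegGrading GB) :
    IsNonnegGrading (tensorGrade K GA GB) where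
  isInternal := isInternal_tensorGrade hA.isInternal hB.isInternal
  eq_bot_of_neg d hd :=
    tensorGrade_eq_bot hA.eq_bot_of_neg hB.eq_bot_of_neg (hd.trans_eq (add_zero 0).symm)
  finiteDimensional d := by
    have := hA.finiteDimensional
    have := hB.finiteDimensional
    let U := (Finset.Icc 0 d).sup fun p =>
      LinearMap.range (TensorProduct.map (GA p).subtype (GB (d - p)).subtype)
    have : FiniteDimensional K U := Submodule.finiteDimensional_finset_sup _ _
    refine Submodule.finiteDimensional_of_le (S₂ := U) (iSup_le fun p => ?_)
    by_cases hp : p ∈ Finset.Icc 0 d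
    · exact Finset.le_sup (f := fun p =>
        LinearMap.range (TensorProduct.map (GA p).subtype (GB (d - p)).subtype)) hp
    · rw [TensorProduct.range_map]
      obtain hp | hp : p < 0 ∨ d - p < 0 := by rw [Finset.mem_Icc] at hp; lia
      · simp [hA.eq_bot_of_neg p hp]
      · simp [hB.eq_bot_of_neg _ hp]

theorem finrank_tensorGrade_congr {GA : ℤ → Submodule K A} {GA' : ℤ → Submodule K A'}
    {GB : ℤ → Submodule K B} {GB' : ℤ → Submodule K B'} (hA : IsNonnegGrading GA)
    (hA' : IsNonnegGrading GA') (hB : IsNonnegGrading GB) (hB' : IsNonnegGrading GB')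
    (hAA' : ∀ d, Module.finrank K (GA d) = Module.finrank K (GA' d))
    (hBB' : ∀ d, Module.finrank K (GB d) = Module.finrank K (GB' d)) (d : ℤ) :
    Module.finrank K (tensorGrade K GA GB d) = Module.finrank K (tensorGrade K GA' GB' d) := by
  have := hA.finiteDimensional
  have := hA'.finiteDimensional
  have := hB.finiteDimensional
  have := hB'.finiteDimensional
  obtain ⟨e, he⟩ := exists_linearEquiv_map_eq hA.isInternal hA'.isInternal hAA'
  obtain ⟨f, hf⟩ := exists_linearEquiv_map_eq hB.isInternal hB'.isInternal hBB'
  have hmap := map_tensorGrade GA GB e.toLinearMap f.toLinearMap d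
  simp only [he, hf] at hmap
  rw [← hmap]
  exact ((TensorProduct.congr e f).finrank_map_eq _).symm

section Kernel

variable {GA : ℤ → Submodule K A} {GB : ℤ → Submodule K B} {f : A →ₗ[K] A'} {g : B →ₗ[K] B'}

theorem ker_map_eq_iSup_tensorGrade (hGA : ⨆ d, GA d = ⊤) (hGB : ⨆ d, GB d = ⊤)
    (hf : Function.Surjective f) (hg : Function.Surjective g)
    (hfker : IsGradedSubspace GA (LinearMap.ker f))
    (hgker : IsGradedSubspace GB (LinearMap.ker g)) :
    LinearMap.ker (TensorProduct.map f g) =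
      ⨆ d, (tensorGrade K (fun p => LinearMap.ker f ⊓ GA p) GB d ⊔
        tensorGrade K GA (fun p => LinearMap.ker g ⊓ GB p) d) := by
  apply le_antisymm
  · rw [TensorProduct.map_ker (LinearMap.exact_subtype_ker_map f) hf
      (LinearMap.exact_subtype_ker_map g) hg, iSup_sup_eq, sup_comm]
    refine sup_le_sup ?_ ?_
    · refine le_trans ?_ (map₂_mk_iSup_le_iSup_tensorGrade _ _)
      rintro _ ⟨x, rfl⟩
      induction x using TensorProduct.induction_on with
      | zero => simp
      | tmul x y => exact Submodule.apply_mem_map₂ _ (hfker.le x.2) (hGB ▸ Submodule.mem_top)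
      | add x y hx hy => rw [map_add]; exact add_mem hx hy
    · refine le_trans ?_ (map₂_mk_iSup_le_iSup_tensorGrade _ _)
      rintro _ ⟨x, rfl⟩
      induction x using TensorProduct.induction_on with
      | zero => simp
      | tmul x y => exact Submodule.apply_mem_map₂ _ (hGA ▸ Submodule.mem_top) (hgker.le y.2)
      | add x y hx hy => rw [map_add]; exact add_mem hx hy
  · refine iSup_le fun d => sup_le ?_ ?_
    · refine tensorGrade_le fun p q _ x hx y _ => ?_
      rw [LinearMap.mem_ker, TensorProduct.map_tmul, LinearMap.mem_ker.1 hx.1, zero_tmul]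
    · refine tensorGrade_le fun p q _ x _ y hy => ?_
      rw [LinearMap.mem_ker, TensorProduct.map_tmul, LinearMap.mem_ker.1 hy.1, tmul_zero]

theorem tensorGrade_ker_sup_le :
    ∀ d, tensorGrade K (fun p => LinearMap.ker f ⊓ GA p) GB d ⊔
      tensorGrade K GA (fun p => LinearMap.ker g ⊓ GB p) d ≤ tensorGrade K GA GB d := fun d =>
  sup_le (tensorGrade_mono (fun _ => inf_le_right) (fun _ => le_rfl) d)
    (tensorGrade_mono (fun _ => le_rfl) (fun _ => inf_le_right) d)

theorem isGradedSubspace_ker_map (hGA : ⨆ d, GA d = ⊤) (hGB : ⨆ d, GB d = ⊤)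
    (hf : Function.Surjective f) (hg : Function.Surjective g)
    (hfker : IsGradedSubspace GA (LinearMap.ker f))
    (hgker : IsGradedSubspace GB (LinearMap.ker g)) :
    IsGradedSubspace (tensorGrade K GA GB) (LinearMap.ker (TensorProduct.map f g)) :=
  isGradedSubspace_of_eq_iSup tensorGrade_ker_sup_le
    (ker_map_eq_iSup_tensorGrade hGA hGB hf hg hfker hgker)

theorem ker_map_inf_tensorGrade (hGA : DirectSum.IsInternal GA) (hGB : DirectSum.IsInternal GB)
    (hf : Function.Surjective f) (hg : Function.Surjective g)
    (hfker : IsGradedSubspace GA (LinearMap.ker f))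
    (hgker : IsGradedSubspace GB (LinearMap.ker g)) (d : ℤ) :
    LinearMap.ker (TensorProduct.map f g) ⊓ tensorGrade K GA GB d =
      tensorGrade K (fun p => LinearMap.ker f ⊓ GA p) GB d ⊔
        tensorGrade K GA (fun p => LinearMap.ker g ⊓ GB p) d := by
  rw [ker_map_eq_iSup_tensorGrade hGA.submodule_iSup_eq_top hGB.submodule_iSup_eq_top hf hg
    hfker hgker]
  exact iSup_inf_eq_of_le (isInternal_tensorGrade hGA hGB).submodule_iSupIndep
    tensorGrade_ker_sup_le d

end Kernel

end Grading

section CommSq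

variable {K} {A B A' B' : Type} [AddCommGroup A] [Module K A] [AddCommGroup B] [Module K B]
  [AddCommGroup A'] [Module K A'] [AddCommGroup B'] [Module K B']
  {f : A →ₗ[K] B} {f' : A' →ₗ[K] B'} {e : A →ₗ[K] A'} {e' : B →ₗ[K] B'}

theorem map_range_eq_range_of_comp_eq (h : e' ∘ₗ f = f' ∘ₗ e) (he : Function.Surjective e) :
    (LinearMap.range f).map e' = LinearMap.range f' := by
  rw [← LinearMap.range_comp, h,
    LinearMap.range_comp_of_range_eq_top _ (LinearMap.range_eq_top.2 he)]

theorem map_ker_eq_ker_of_comp_eq (h : e' ∘ₗ f = f' ∘ₗ e) (he : Function.Surjective e)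
    (he' : Function.Injective e') : (LinearMap.ker f).map e = LinearMap.ker f' := by
  rw [← LinearMap.ker_comp_of_ker_eq_bot _ (LinearMap.ker_eq_bot.2 he'), h, LinearMap.ker_comp,
    Submodule.map_comap_eq_of_surjective he]

end CommSq

section BarTensors

variable {K n} {L L' A : Type} [AddCommGroup L] [Module K L] [AddCommGroup L'] [Module K L']
  [AddCommGroup A] [Module K A]

/-- The pairing `S × D_i → D_{i+1}`, `(s, x) ↦ s ⊗ x`. It spares the elaborator from unfolding
`barD` to see that `D_{i+1}` is a tensor product. -/
def barTmul (i : ℕ) : PS K n →ₗ[K] barD K n L i →ₗ[K] barD K n L (i + 1) :=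
  TensorProduct.mk K (PS K n) (barD K n L i)

theorem barD_hom_ext {i : ℕ} {f g : barD K n L (i + 1) →ₗ[K] A}
    (h : ∀ s x, f (barTmul i s x) = g (barTmul i s x)) : f = g :=
  TensorProduct.ext' h

theorem tensor_barD_hom_ext {B : Type} [AddCommGroup B] [Module K B] {i : ℕ}
    {f g : B ⊗[K] barD K n L (i + 1) →ₗ[K] A}
    (h : ∀ b s x, f (b ⊗ₜ barTmul i s x) = g (b ⊗ₜ barTmul i s x)) : f = g :=
  TensorProduct.ext (LinearMap.ext fun b => barD_hom_ext (h b))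

/-- The map `D_i(L) → D_i(L')` given by a ring endomorphism of `S` on the factors `S` and a
linear map on the factor `L`. -/
def barMap (h : PS K n →ₐ[K] PS K n) (φ : L →ₗ[K] L') :
    (i : ℕ) → barD K n L i →ₗ[K] barD K n L' i
  | 0 => φ
  | i + 1 => TensorProduct.map h.toLinearMap (barMap h φ i)

theorem barMap_barTmul (h : PS K n →ₐ[K] PS K n) (φ : L →ₗ[K] L') (i : ℕ) (s : PS K n)
    (x : barD K n L i) :
    barMap h φ (i + 1) (barTmul i s x) = barTmul i (h s) (barMap h φ i x) :=
  rfl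

theorem barMap_injective {h : PS K n →ₐ[K] PS K n} {φ : L →ₗ[K] L'}
    (hh : Function.Injective h) (hφ : Function.Injective φ) :
    ∀ i, Function.Injective (barMap h φ i)
  | 0 => hφ
  | i + 1 => TensorProduct.map_injective_of_flat_flat h.toLinearMap (barMap h φ i) hh
      (barMap_injective hh hφ i)

theorem barMap_surjective {h : PS K n →ₐ[K] PS K n} {φ : L →ₗ[K] L'}
    (hh : Function.Surjective h) (hφ : Function.Surjective φ) :
    ∀ i, Function.Surjective (barMap h φ i)
  | 0 => hφ
  | i + 1 => TensorProduct.map_surjective (g := h.toLinearMap) (g' := barMap h φ i) hh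
      (barMap_surjective hh hφ i)

theorem map_barMap_barDGrade {h : PS K n →ₐ[K] PS K n}
    (hh : ∀ d, (polyGrade K n d).map h.toLinearMap = polyGrade K n d) (φ : L →ₗ[K] L')
    (G : ℤ → Submodule K L) (i : ℕ) :
    (fun d => (barDGrade K n L G i d).map (barMap h φ i)) =
      barDGrade K n L' (fun d => (G d).map φ) i := by
  induction i with
  | zero => rfl
  | succ i ih =>
    funext d
    refine (map_tensorGrade (polyGrade K n) (barDGrade K n L G i) h.toLinearMap
      (barMap h φ i) d).trans ?_
    simp only [hh, ih]
    rfl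

theorem map_tensorGrade_barDGrade {B B' : Type} [AddCommGroup B] [Module K B] [AddCommGroup B']
    [Module K B'] {h : PS K n →ₐ[K] PS K n}
    (hh : ∀ d, (polyGrade K n d).map h.toLinearMap = polyGrade K n d) (φ : L →ₗ[K] L')
    (ψ : B →ₗ[K] B') (G : ℤ → Submodule K L) (GB : ℤ → Submodule K B) (i : ℕ) (d : ℤ) :
    (tensorGrade K GB (barDGrade K n L G i) d).map (TensorProduct.map ψ (barMap h φ i)) =
      tensorGrade K (fun d => (GB d).map ψ) (barDGrade K n L' (fun d => (G d).map φ) i) d := by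
  rw [map_tensorGrade, map_barMap_barDGrade hh]

end BarTensors

section BarComplex

variable {K n} {N M} {N' M' : Type}
  [AddCommGroup N'] [Module K N'] [Module (PS K n) N'] [IsScalarTower K (PS K n) N']
  [AddCommGroup M'] [Module K M'] [Module (PS K n) M'] [IsScalarTower K (PS K n) M']

/-- The action of `s ∈ S` on `D_i` through the leftmost tensor factor. -/
def barAct (s : PS K n) : (i : ℕ) → barD K n N i →ₗ[K] barD K n N i
  | 0 => smulBilin K n N s
  | i + 1 => (LinearMap.mulLeft K s).rTensor (barD K n N i)

theorem barAct_barTmul (i : ℕ) (s s' : PS K n) (x : barD K n N i) :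
    barAct s (i + 1) (barTmul i s' x) = barTmul i (s * s') x :=
  rfl

theorem barC_zero_barTmul (s : PS K n) (x : barD K n N 0) :
    barC K n N 0 (barTmul 0 s x) = barAct s 0 x :=
  rfl

theorem barC_succ_barTmul (i : ℕ) (s : PS K n) (x : barD K n N (i + 1)) :
    barC K n N (i + 1) (barTmul (i + 1) s x) =
      barAct s (i + 1) x - barTmul i s (barC K n N i x) :=
  LinearMap.congr_fun (f := barC K n N (i + 1) ∘ₗ barTmul (i + 1) s)
    (g := barAct s (i + 1) - barTmul i s ∘ₗ barC K n N i) (barD_hom_ext fun _ _ => rfl) x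

theorem barB_tmul_barTmul (i : ℕ) (m : M) (s : PS K n) (x : barD K n N i) :
    barB K n N M i (m ⊗ₜ[K] barTmul i s x) =
      (s • m) ⊗ₜ[K] x - m ⊗ₜ[K] barC K n N i (barTmul i s x) :=
  rfl

theorem barMap_barAct {h : PS K n →ₐ[K] PS K n} {φ : N →ₗ[K] N'}
    (hφ : ∀ (s : PS K n) (x : N), φ (s • x) = h s • φ x) (i : ℕ) (s : PS K n)
    (x : barD K n N i) : barMap h φ i (barAct s i x) = barAct (h s) i (barMap h φ i x) := by
  cases i with
  | zero => exact hφ s x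
  | succ i =>
    refine LinearMap.congr_fun (f := barMap h φ (i + 1) ∘ₗ barAct s (i + 1))
      (g := barAct (h s) (i + 1) ∘ₗ barMap h φ (i + 1)) (barD_hom_ext fun s' t => ?_) x
    simp only [LinearMap.comp_apply, barAct_barTmul, barMap_barTmul, map_mul]

theorem barMap_comp_barC {h : PS K n →ₐ[K] PS K n} {φ : N →ₗ[K] N'}
    (hφ : ∀ (s : PS K n) (x : N), φ (s • x) = h s • φ x) (i : ℕ) :
    barMap h φ i ∘ₗ barC K n N i = barC K n N' i ∘ₗ barMap h φ (i + 1) := by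
  induction i with
  | zero => exact barD_hom_ext fun s x => barMap_barAct hφ 0 s x
  | succ i ih =>
    refine barD_hom_ext fun s x => ?_
    have ihx := LinearMap.congr_fun ih x
    simp only [LinearMap.comp_apply] at ihx ⊢
    rw [barC_succ_barTmul, barMap_barTmul h φ (i + 1), barC_succ_barTmul, map_sub,
      barMap_barAct hφ, barMap_barTmul, ihx]

theorem map_comp_barB {h : PS K n →ₐ[K] PS K n} {φ : N →ₗ[K] N'} {ψ : M →ₗ[K] M'}
    (hφ : ∀ (s : PS K n) (x : N), φ (s • x) = h s • φ x)
    (hψ : ∀ (s : PS K n) (x : M), ψ (s • x) = h s • ψ x) (i : ℕ) :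
    TensorProduct.map ψ (barMap h φ i) ∘ₗ barB K n N M i =
      barB K n N' M' i ∘ₗ TensorProduct.map ψ (barMap h φ (i + 1)) := by
  refine tensor_barD_hom_ext fun m s x => ?_
  have hC := LinearMap.congr_fun (barMap_comp_barC hφ i) (barTmul i s x)
  simp only [LinearMap.comp_apply] at hC ⊢
  rw [barB_tmul_barTmul, map_sub, TensorProduct.map_tmul, TensorProduct.map_tmul,
    TensorProduct.map_tmul, barMap_barTmul, barB_tmul_barTmul, hψ, hC, barMap_barTmul]

variable (K n N M) in
/-- The cycles of the bar complex in homological degree `i`. -/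
def barCycles : (i : ℕ) → Submodule K (M ⊗[K] barD K n N i)
  | 0 => ⊤
  | i + 1 => LinearMap.ker (barB K n N M i)

theorem torStrandDim_eq_finrank_barCycles_sub (GM : ℤ → Submodule K M) (GN : ℤ → Submodule K N)
    (i : ℕ) (j : ℤ) :
    torStrandDim K n N M GM GN i j =
      Module.finrank K ↥(barCycles K n N M i ⊓ tensorGrade K GM (barDGrade K n N GN i) j) -
      Module.finrank K
        ↥(LinearMap.range (barB K n N M i) ⊓ tensorGrade K GM (barDGrade K n N GN i) j) := by
  cases i with
  | zero => rw [barCycles, top_inf_eq]; rfl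
  | succ i => rfl

theorem torStrandDim_map {h : PS K n →ₐ[K] PS K n} {φ : N →ₗ[K] N'} {ψ : M →ₗ[K] M'}
    (hh : Function.Bijective h)
    (hgrade : ∀ d, (polyGrade K n d).map h.toLinearMap = polyGrade K n d)
    (hφ : ∀ (s : PS K n) (x : N), φ (s • x) = h s • φ x)
    (hψ : ∀ (s : PS K n) (x : M), ψ (s • x) = h s • ψ x)
    (hφbij : Function.Bijective φ) (hψbij : Function.Bijective ψ)
    (GN : ℤ → Submodule K N) (GM : ℤ → Submodule K M) (i : ℕ) (j : ℤ) :
    torStrandDim K n N' M' (fun d => (GM d).map ψ) (fun d => (GN d).map φ) i j =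
      torStrandDim K n N M GM GN i j := by
  let F (i : ℕ) : M ⊗[K] barD K n N i →ₗ[K] M' ⊗[K] barD K n N' i :=
    TensorProduct.map ψ (barMap h φ i)
  have hinj (i : ℕ) : Function.Injective (F i) :=
    TensorProduct.map_injective_of_flat_flat _ _ hψbij.1 (barMap_injective hh.1 hφbij.1 i)
  have hsurj (i : ℕ) : Function.Surjective (F i) :=
    TensorProduct.map_surjective hψbij.2 (barMap_surjective hh.2 hφbij.2 i)
  have hcomm (i : ℕ) : F i ∘ₗ barB K n N M i = barB K n N' M' i ∘ₗ F (i + 1) :=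
    map_comp_barB hφ hψ i
  have hcycles : ∀ i, (barCycles K n N M i).map (F i) = barCycles K n N' M' i
    | 0 => by
      rw [barCycles, Submodule.map_top, LinearMap.range_eq_top.2 (hsurj 0), barCycles]
    | i + 1 => map_ker_eq_ker_of_comp_eq (hcomm i) (hsurj (i + 1)) (hinj i)
  have hfinrank (U : Submodule K (M ⊗[K] barD K n N i)) :
      Module.finrank K (U.map (F i)) = Module.finrank K U :=
    (Submodule.equivMapOfInjective _ (hinj i) U).finrank_eq.symm
  rw [torStrandDim_eq_finrank_barCycles_sub, torStrandDim_eq_finrank_barCycles_sub,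
    ← hcycles, ← map_range_eq_range_of_comp_eq (hcomm i) (hsurj (i + 1)),
    ← map_tensorGrade_barDGrade hgrade, ← Submodule.map_inf _ (hinj i),
    ← Submodule.map_inf _ (hinj i), hfinrank, hfinrank]

end BarComplex

section Vanishing

variable {K n} {N M}

theorem barC_barAct (i : ℕ) (s : PS K n) (x : barD K n N (i + 1)) :
    barC K n N i (barAct s (i + 1) x) = barAct s i (barC K n N i x) := by
  refine LinearMap.congr_fun (f := barC K n N i ∘ₗ barAct s (i + 1))
    (g := barAct s i ∘ₗ barC K n N i) (barD_hom_ext fun s' x => ?_) x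
  rw [LinearMap.comp_apply, LinearMap.comp_apply, barAct_barTmul]
  cases i with
  | zero => exact mul_smul (α := PS K n) (β := N) s s' x
  | succ i =>
    have hmul : barAct (s * s') (i + 1) = barAct (N := N) s (i + 1) ∘ₗ barAct s' (i + 1) :=
      barD_hom_ext fun t y => by
        rw [LinearMap.comp_apply, barAct_barTmul, barAct_barTmul, barAct_barTmul, mul_assoc]
    rw [barC_succ_barTmul, barC_succ_barTmul, map_sub, barAct_barTmul, hmul, LinearMap.comp_apply]

theorem barC_comp_barC (i : ℕ) : barC K n N i ∘ₗ barC K n N (i + 1) = 0 := by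
  induction i with
  | zero =>
    refine barD_hom_ext fun s x => ?_
    rw [LinearMap.comp_apply, barC_succ_barTmul, map_sub, barC_barAct, barC_zero_barTmul,
      sub_self, LinearMap.zero_apply]
  | succ i ih =>
    refine barD_hom_ext fun s x => ?_
    have ihx : barC K n N i (barC K n N (i + 1) x) = 0 := LinearMap.congr_fun ih x
    rw [LinearMap.comp_apply, barC_succ_barTmul, map_sub, barC_barAct, barC_succ_barTmul, ihx,
      map_zero, sub_zero, sub_self, LinearMap.zero_apply]

theorem barB_tmul_barAct (i : ℕ) (m : M) (s : PS K n) (x : barD K n N (i + 1)) :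
    barB K n N M i (m ⊗ₜ barAct s (i + 1) x) = barB K n N M i ((s • m) ⊗ₜ x) +
      (s • m) ⊗ₜ barC K n N i x - m ⊗ₜ barAct s i (barC K n N i x) := by
  refine LinearMap.congr_fun
    (f := barB K n N M i ∘ₗ TensorProduct.mk K M _ m ∘ₗ barAct s (i + 1))
    (g := barB K n N M i ∘ₗ TensorProduct.mk K M _ (s • m) +
      TensorProduct.mk K M _ (s • m) ∘ₗ barC K n N i -
      TensorProduct.mk K M _ m ∘ₗ barAct s i ∘ₗ barC K n N i)
    (barD_hom_ext fun s' x => ?_) x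
  simp only [LinearMap.comp_apply, LinearMap.sub_apply, LinearMap.add_apply,
    TensorProduct.mk_apply]
  rw [← barC_barAct, barAct_barTmul, barB_tmul_barTmul, barB_tmul_barTmul, sub_add_cancel,
    smul_smul, mul_comm]

theorem barB_comp_barB (i : ℕ) : barB K n N M i ∘ₗ barB K n N M (i + 1) = 0 := by
  refine tensor_barD_hom_ext fun m s x => ?_
  have hC : barC K n N i (barC K n N (i + 1) (barTmul (i + 1) s x)) = 0 :=
    LinearMap.congr_fun (barC_comp_barC i) _
  rw [barC_succ_barTmul, map_sub, barC_barAct, sub_eq_zero] at hC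
  rw [LinearMap.comp_apply, barB_tmul_barTmul, barC_succ_barTmul, tmul_sub, map_sub, map_sub,
    barB_tmul_barAct, barB_tmul_barTmul, ← hC, LinearMap.zero_apply]
  abel

theorem rTensor_comp_barB {P Q : Type} [AddCommGroup P] [Module K P] [Module (PS K n) P]
    [IsScalarTower K (PS K n) P] [AddCommGroup Q] [Module K Q] [Module (PS K n) Q]
    [IsScalarTower K (PS K n) Q] (f : P →ₗ[PS K n] Q) (i : ℕ) :
    (f.restrictScalars K).rTensor (barD K n N i) ∘ₗ barB K n N P i =
      barB K n N Q i ∘ₗ (f.restrictScalars K).rTensor (barD K n N (i + 1)) := by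
  refine tensor_barD_hom_ext fun m s x => ?_
  simp only [LinearMap.comp_apply, LinearMap.rTensor_tmul, barB_tmul_barTmul, map_sub,
    LinearMap.restrictScalars_apply, map_smul]

section Homotopy

variable {L B : Type} [AddCommGroup L] [Module K L] [AddCommGroup B] [Module K B]

variable (K n L B) in
/-- The contracting homotopy `(s ⊗ m) ⊗ x ↦ (1 ⊗ m) ⊗ (s ⊗ x)` of the bar complex of the free
module `S ⊗ B`. -/
def barHomotopy (i : ℕ) :
    (PS K n ⊗[K] B) ⊗[K] barD K n L i →ₗ[K] (PS K n ⊗[K] B) ⊗[K] barD K n L (i + 1) :=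
  (TensorProduct.mk K (PS K n) B 1).rTensor (barD K n L (i + 1)) ∘ₗ
    (TensorProduct.leftComm K (PS K n) B (barD K n L i)).toLinearMap ∘ₗ
    (TensorProduct.assoc K (PS K n) B (barD K n L i)).toLinearMap

theorem barHomotopy_tmul (i : ℕ) (s : PS K n) (m : B) (x : barD K n L i) :
    barHomotopy K n L B i ((s ⊗ₜ m) ⊗ₜ x) = (1 ⊗ₜ m) ⊗ₜ barTmul i s x :=
  rfl

theorem barB_comp_barHomotopy_add (i : ℕ) :
    barB K n N (PS K n ⊗[K] B) (i + 1) ∘ₗ barHomotopy K n N B (i + 1) +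
      barHomotopy K n N B i ∘ₗ barB K n N (PS K n ⊗[K] B) i = LinearMap.id := by
  refine TensorProduct.ext_threefold fun s m x => LinearMap.congr_fun
    (f := (barB K n N (PS K n ⊗[K] B) (i + 1) ∘ₗ barHomotopy K n N B (i + 1) +
      barHomotopy K n N B i ∘ₗ barB K n N (PS K n ⊗[K] B) i) ∘ₗ TensorProduct.mk K _ _ (s ⊗ₜ m))
    (g := TensorProduct.mk K _ _ (s ⊗ₜ m))
    (barD_hom_ext (A := (PS K n ⊗[K] B) ⊗[K] barD K n N (i + 1)) fun s' x => ?_) x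
  simp only [TensorProduct.mk_apply, LinearMap.add_apply, LinearMap.comp_apply]
  rw [barHomotopy_tmul, barB_tmul_barTmul, barB_tmul_barTmul, barC_succ_barTmul, barAct_barTmul,
    TensorProduct.smul_tmul', TensorProduct.smul_tmul', map_sub, barHomotopy_tmul,
    barHomotopy_tmul, tmul_sub, smul_eq_mul, smul_eq_mul, mul_one, mul_comm s' s]
  abel

theorem ker_barB_le_range_barB_of_free (i : ℕ) :
    LinearMap.ker (barB K n N (PS K n ⊗[K] B) i) ≤
      LinearMap.range (barB K n N (PS K n ⊗[K] B) (i + 1)) := fun z hz =>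
  ⟨barHomotopy K n N B (i + 1) z, by
    simpa [LinearMap.mem_ker.1 hz] using LinearMap.congr_fun (barB_comp_barHomotopy_add i) z⟩

end Homotopy

variable (K n M) in
/-- The multiplication map `S ⊗ M → M`. -/
def smulHom : PS K n ⊗[K] M →ₗ[PS K n] M :=
  LinearMap.liftBaseChange (PS K n) LinearMap.id

theorem smulHom_tmul (s : PS K n) (m : M) : smulHom K n M (s ⊗ₜ m) = s • m :=
  LinearMap.liftBaseChange_tmul _ _ _ _

variable (K n M) in
/-- The syzygy module of `M` with respect to the cover `S ⊗ M → M`. -/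
def Syzygy : Type := LinearMap.ker (smulHom K n M)

namespace Syzygy

instance : AddCommGroup (Syzygy K n M) :=
  inferInstanceAs (AddCommGroup (LinearMap.ker (smulHom K n M)))

instance : Module (PS K n) (Syzygy K n M) :=
  inferInstanceAs (Module (PS K n) (LinearMap.ker (smulHom K n M)))

instance : Module K (Syzygy K n M) :=
  inferInstanceAs (Module K (LinearMap.ker (smulHom K n M)))

instance : IsScalarTower K (PS K n) (Syzygy K n M) :=
  inferInstanceAs (IsScalarTower K (PS K n) (LinearMap.ker (smulHom K n M)))

variable (K n M) in
/-- The inclusion of the syzygy module. -/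
def incl : Syzygy K n M →ₗ[PS K n] PS K n ⊗[K] M :=
  (LinearMap.ker (smulHom K n M)).subtype

theorem incl_injective : Function.Injective (incl K n M) :=
  Subtype.val_injective

theorem smulHom_incl (x : Syzygy K n M) : smulHom K n M (incl K n M x) = 0 :=
  x.2

variable (K n M) in
/-- The map `m ⊗ s ↦ s ⊗ m - 1 ⊗ s m`. -/
def ofTensor : M ⊗[K] PS K n →ₗ[K] Syzygy K n M :=
  LinearMap.codRestrict ((LinearMap.ker (smulHom K n M)).restrictScalars K)
    ((TensorProduct.comm K M (PS K n)).toLinearMap -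
      TensorProduct.mk K (PS K n) M 1 ∘ₗ smulMapM K n M) fun x =>
    LinearMap.congr_fun (f := (smulHom K n M).restrictScalars K ∘ₗ
      ((TensorProduct.comm K M (PS K n)).toLinearMap -
        TensorProduct.mk K (PS K n) M 1 ∘ₗ smulMapM K n M)) (g := 0)
      (TensorProduct.ext' fun m s => by
        change smulHom K n M (s ⊗ₜ m - 1 ⊗ₜ (s • m)) = 0
        rw [map_sub, smulHom_tmul, smulHom_tmul, one_smul, sub_self]) x

theorem incl_ofTensor_tmul (m : M) (s : PS K n) :
    incl K n M (ofTensor K n M (m ⊗ₜ s)) =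
      s • TensorProduct.mk K (PS K n) M 1 m - TensorProduct.mk K (PS K n) M 1 (s • m) := by
  rw [TensorProduct.mk_apply, TensorProduct.smul_tmul', smul_eq_mul, mul_one]
  rfl

end Syzygy

/-- If `0 → Q → P → M → 0` is a sequence of `S`-modules with `K`-linear section `σ : M → P`, and
`κ : M ⊗ S → Q` corestricts `m ⊗ s ↦ s σ(m) - σ(s m)`, then this map induces the connecting
homomorphism in the homology of the bar complex. -/
def barConnecting (L : Type) [AddCommGroup L] [Module K L] {B Q : Type} [AddCommGroup B]
    [Module K B] [AddCommGroup Q] [Module K Q] (κ : B ⊗[K] PS K n →ₗ[K] Q) (i : ℕ) :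
    B ⊗[K] barD K n L (i + 1) →ₗ[K] Q ⊗[K] barD K n L i :=
  κ.rTensor (barD K n L i) ∘ₗ (TensorProduct.assoc K B (PS K n) (barD K n L i)).symm.toLinearMap

theorem barConnecting_tmul_barTmul {L B Q : Type} [AddCommGroup L] [Module K L] [AddCommGroup B]
    [Module K B] [AddCommGroup Q] [Module K Q] (κ : B ⊗[K] PS K n →ₗ[K] Q) (i : ℕ) (m : B)
    (s : PS K n) (x : barD K n L i) :
    barConnecting L κ i (m ⊗ₜ barTmul i s x) = κ (m ⊗ₜ s) ⊗ₜ x :=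
  rfl

section Connecting

variable {P Q : Type} [AddCommGroup P] [Module K P] [Module (PS K n) P] [IsScalarTower K (PS K n) P]
  [AddCommGroup Q] [Module K Q] [Module (PS K n) Q] [IsScalarTower K (PS K n) Q]
  {ι : Q →ₗ[PS K n] P} {π : P →ₗ[PS K n] M} {σ : M →ₗ[K] P} {κ : M ⊗[K] PS K n →ₗ[K] Q}

theorem rTensor_comp_barConnecting
    (hκ : ∀ (m : M) (s : PS K n), ι (κ (m ⊗ₜ s)) = s • σ m - σ (s • m)) (i : ℕ) :
    (ι.restrictScalars K).rTensor (barD K n N i) ∘ₗ barConnecting N κ i =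
      barB K n N P i ∘ₗ σ.rTensor (barD K n N (i + 1)) -
        σ.rTensor (barD K n N i) ∘ₗ barB K n N M i := by
  refine tensor_barD_hom_ext fun m s x => ?_
  simp only [LinearMap.comp_apply, LinearMap.sub_apply, LinearMap.rTensor_tmul,
    barConnecting_tmul_barTmul, barB_tmul_barTmul, map_sub, LinearMap.restrictScalars_apply, hκ,
    TensorProduct.sub_tmul]
  abel

theorem rTensor_barConnecting
    (hκ : ∀ (m : M) (s : PS K n), ι (κ (m ⊗ₜ s)) = s • σ m - σ (s • m)) {i : ℕ}
    {z : M ⊗[K] barD K n N (i + 1)} (hz : barB K n N M i z = 0) :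
    (ι.restrictScalars K).rTensor (barD K n N i) (barConnecting N κ i z) =
      barB K n N P i (σ.rTensor (barD K n N (i + 1)) z) := by
  simpa [hz] using LinearMap.congr_fun (rTensor_comp_barConnecting hκ i) z

theorem barConnecting_mem_barCycles (hι : Function.Injective ι)
    (hκ : ∀ (m : M) (s : PS K n), ι (κ (m ⊗ₜ s)) = s • σ m - σ (s • m)) {i : ℕ}
    {z : M ⊗[K] barD K n N (i + 1)} (hz : barB K n N M i z = 0) :
    barConnecting N κ i z ∈ barCycles K n N Q i := by
  cases i with
  | zero => exact Submodule.mem_top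
  | succ i =>
    refine Module.Flat.rTensor_preserves_injective_linearMap (M := barD K n N i)
      (ι.restrictScalars K) hι ?_
    rw [← LinearMap.comp_apply, rTensor_comp_barB, LinearMap.comp_apply,
      rTensor_barConnecting hκ hz, map_zero]
    exact LinearMap.congr_fun (barB_comp_barB i) _

theorem mem_range_barB_of_barConnecting_mem
    (hκ : ∀ (m : M) (s : PS K n), ι (κ (m ⊗ₜ s)) = s • σ m - σ (s • m)) (hπσ : ∀ m, π (σ m) = m)
    (hπι : ∀ q, π (ι q) = 0) {i : ℕ}
    (hP : LinearMap.ker (barB K n N P i) ≤ LinearMap.range (barB K n N P (i + 1)))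
    {z : M ⊗[K] barD K n N (i + 1)} (hz : barB K n N M i z = 0)
    (hconn : barConnecting N κ i z ∈ LinearMap.range (barB K n N Q i)) :
    z ∈ LinearMap.range (barB K n N M (i + 1)) := by
  obtain ⟨y, hy⟩ := hconn
  have hπσ' : π.restrictScalars K ∘ₗ σ = LinearMap.id := LinearMap.ext hπσ
  have hπι' : π.restrictScalars K ∘ₗ ι.restrictScalars K = 0 := LinearMap.ext hπι
  have hcycle : σ.rTensor (barD K n N (i + 1)) z -
      (ι.restrictScalars K).rTensor (barD K n N (i + 1)) y ∈ LinearMap.ker (barB K n N P i) := by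
    have hnat := LinearMap.congr_fun (rTensor_comp_barB (N := N) ι i) y
    rw [LinearMap.comp_apply, LinearMap.comp_apply, hy] at hnat
    rw [LinearMap.mem_ker, map_sub, sub_eq_zero, ← rTensor_barConnecting hκ hz, hnat]
  obtain ⟨x, hx⟩ := hP hcycle
  refine ⟨(π.restrictScalars K).rTensor _ x, ?_⟩
  rw [← LinearMap.comp_apply, ← rTensor_comp_barB, LinearMap.comp_apply, hx, map_sub,
    ← LinearMap.rTensor_comp_apply, ← LinearMap.rTensor_comp_apply, hπσ', hπι',
    LinearMap.rTensor_id, LinearMap.rTensor_zero, LinearMap.id_apply, LinearMap.zero_apply,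
    sub_zero]

end Connecting

theorem polyGrade_of_neg {d : ℤ} (hd : d < 0) : polyGrade K n d = ⊥ :=
  if_neg hd.not_ge

theorem polyGrade_natCast (d : ℕ) : polyGrade K n d = homogeneousSubmodule (Fin n) K d :=
  if_pos (Int.natCast_nonneg d)

theorem map_ofTensor_eq_bot {GM : ℤ → Submodule K M} {a d : ℤ} (hM : ∀ d < a, GM d = ⊥)
    (hd : d < a + 1) : (tensorGrade K GM (polyGrade K n) d).map (Syzygy.ofTensor K n M) = ⊥ := by
  rw [eq_bot_iff, Submodule.map_le_iff_le_comap]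
  refine tensorGrade_le fun p q hpq m hm s hs => ?_
  rw [Submodule.mem_comap, Submodule.mem_bot]
  by_cases hp : p < a
  · rw [hM p hp, Submodule.mem_bot] at hm
    rw [hm, zero_tmul, map_zero]
  by_cases hq : q < 0
  · rw [polyGrade_of_neg hq, Submodule.mem_bot] at hs
    rw [hs, tmul_zero, map_zero]
  obtain rfl : q = (0 : ℕ) := by lia
  rw [polyGrade_natCast, mem_homogeneousSubmodule, ← totalDegree_zero_iff_isHomogeneous,
    totalDegree_eq_zero_iff_eq_C] at hs
  obtain ⟨c, rfl⟩ : ∃ c : K, s = algebraMap K (PS K n) c := ⟨_, hs⟩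
  refine Syzygy.incl_injective ?_
  rw [Syzygy.incl_ofTensor_tmul, algebraMap_smul, algebraMap_smul, map_smul, sub_self, map_zero]

theorem map_barConnecting_tensorGrade_le {L B Q : Type} [AddCommGroup L] [Module K L]
    [AddCommGroup B] [Module K B] [AddCommGroup Q] [Module K Q] (κ : B ⊗[K] PS K n →ₗ[K] Q)
    (GD : ℤ → Submodule K L) (GB : ℤ → Submodule K B) (i : ℕ) (j : ℤ) :
    (tensorGrade K GB (barDGrade K n L GD (i + 1)) j).map (barConnecting L κ i) ≤
      tensorGrade K (fun d => (tensorGrade K GB (polyGrade K n) d).map κ)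
        (barDGrade K n L GD i) j := by
  rw [Submodule.map_le_iff_le_comap]
  refine tensorGrade_le fun p q hpq m hm y hy => ?_
  rw [Submodule.mem_comap, ← TensorProduct.mk_apply (R := K), ← LinearMap.comp_apply,
    ← Submodule.mem_comap]
  refine tensorGrade_le (GA := polyGrade K n) (GB := barDGrade K n L GD i)
    (fun p' q' hpq' s hs x hx => ?_) hy
  exact tmul_mem_tensorGrade (p := p + p') (q := q') (by lia)
    (Submodule.mem_map_of_mem (tmul_mem_tensorGrade rfl hm hs)) hx

theorem barCycles_inf_tensorGrade_le_range_barB {GN : ℤ → Submodule K N}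
    (hN : ∀ d < 0, GN d = ⊥) (i : ℕ) :
    ∀ (M : Type) [AddCommGroup M] [Module K M] [Module (PS K n) M] [IsScalarTower K (PS K n) M]
      (GM : ℤ → Submodule K M) (a j : ℤ), (∀ d < a, GM d = ⊥) → j < a + i →
      barCycles K n N M i ⊓ tensorGrade K GM (barDGrade K n N GN i) j ≤
        LinearMap.range (barB K n N M i) := by
  induction i with
  | zero =>
    intro M _ _ _ _ GM a j hM hj
    exact inf_le_right.trans ((tensorGrade_eq_bot hM hN hj).le.trans bot_le)
  | succ i ih =>
    rintro M _ _ _ _ GM a j hM hj z ⟨hcycle, hz⟩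
    have hκ := Syzygy.incl_ofTensor_tmul (K := K) (n := n) (M := M)
    exact mem_range_barB_of_barConnecting_mem hκ
      (fun m => (smulHom_tmul 1 m).trans (one_smul _ m)) Syzygy.smulHom_incl
      (ker_barB_le_range_barB_of_free i) hcycle
      (ih _ _ (a + 1) j (fun d hd => map_ofTensor_eq_bot hM hd) (by push_cast at hj; lia)
        ⟨barConnecting_mem_barCycles Syzygy.incl_injective hκ hcycle,
          map_barConnecting_tensorGrade_le _ _ _ _ _ (Submodule.mem_map_of_mem hz)⟩)

theorem torStrandDim_eq_zero {GM : ℤ → Submodule K M} {GN : ℤ → Submodule K N}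
    (hM : ∀ d < 0, GM d = ⊥) (hN : ∀ d < 0, GN d = ⊥) {i : ℕ} {j : ℤ} (hij : j < i) :
    torStrandDim K n N M GM GN i j = 0 := by
  have hrange : LinearMap.range (barB K n N M i) ≤ barCycles K n N M i := by
    cases i with
    | zero => exact le_top
    | succ i => exact LinearMap.range_le_ker_iff.2 (barB_comp_barB i)
  have hcycles := barCycles_inf_tensorGrade_le_range_barB (n := n) hN i M GM 0 j hM (by lia)
  rw [torStrandDim_eq_finrank_barCycles_sub,
    (inf_le_inf_right _ hrange).antisymm (le_inf hcycles inf_le_right), Nat.sub_self]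

end Vanishing

section PolyGrade

variable {K n}

theorem mem_polyGrade_iff {d : ℤ} {f : PS K n} :
    f ∈ polyGrade K n d ↔ ∀ m ∈ f.support, (m.degree : ℤ) = d := by
  obtain hd | hd := lt_or_ge d 0
  · rw [polyGrade_of_neg hd, Submodule.mem_bot, ← support_eq_empty,
      Finset.eq_empty_iff_forall_notMem]
    exact forall_congr' fun m => imp_congr_right fun _ => iff_of_false id (by lia)
  · lift d to ℕ using hd
    simp only [polyGrade_natCast, mem_homogeneousSubmodule, IsHomogeneous, IsWeightedHomogeneous,
      Finsupp.degree_eq_weight_one, mem_support_iff, Nat.cast_inj]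
    rfl

theorem monomial_mem_polyGrade (m : Fin n →₀ ℕ) (c : K) :
    monomial m c ∈ polyGrade K n (m.degree : ℤ) := by
  rw [polyGrade_natCast]
  exact isHomogeneous_monomial c rfl

theorem mul_mem_polyGrade {p q : ℤ} {s t : PS K n} (hs : s ∈ polyGrade K n p)
    (ht : t ∈ polyGrade K n q) : s * t ∈ polyGrade K n (p + q) := by
  rw [mem_polyGrade_iff] at *
  intro m hm
  obtain ⟨a, ha, b, hb, rfl⟩ := Finset.mem_add.1 (support_mul s t hm)
  rw [map_add, Nat.cast_add, hs a ha, ht b hb]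

instance : SetLike.GradedSMul (polyGrade K n) (polyGrade K n) where
  smul_mem _ _ _ _ := mul_mem_polyGrade

theorem span_basisMonomials_degree (d : ℤ) :
    Submodule.span K (basisMonomials (Fin n) K '' ((fun m => (m.degree : ℤ)) ⁻¹' {d})) =
      polyGrade K n d := by
  refine le_antisymm (Submodule.span_le.2 ?_) fun f hf => ?_
  · rintro _ ⟨m, rfl, rfl⟩
    exact monomial_mem_polyGrade m 1
  · rw [f.as_sum]
    refine Submodule.sum_mem _ fun m hm => ?_
    rw [← mul_one (coeff m f), ← smul_eq_mul, ← smul_monomial]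
    exact Submodule.smul_mem _ _ (Submodule.subset_span ⟨m, mem_polyGrade_iff.1 hf m hm, rfl⟩)

theorem isNonnegGrading_polyGrade : IsNonnegGrading (polyGrade K n) where
  isInternal := by
    simpa only [span_basisMonomials_degree] using
      isInternal_span_image (basisMonomials (Fin n) K) fun m => (m.degree : ℤ)
  eq_bot_of_neg _ := polyGrade_of_neg
  finiteDimensional d := by
    obtain hd | hd := lt_or_ge d 0
    · rw [polyGrade_of_neg hd]
      infer_instance
    · lift d to ℕ using hd
      rw [polyGrade_natCast]
      exact Module.Finite.iff_fg.2 (homogeneousSubmodule_fg (Fin n) K d)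

end PolyGrade

section GradedBarComplex

variable {K n} {N M} {GN : ℤ → Submodule K N} {GM : ℤ → Submodule K M}

theorem IsNonnegGrading.barDGrade {L : Type} [AddCommGroup L] [Module K L]
    {G : ℤ → Submodule K L} (hG : IsNonnegGrading G) (i : ℕ) :
    IsNonnegGrading (barDGrade K n L G i) := by
  induction i with
  | zero => exact hG
  | succ i ih => exact isNonnegGrading_polyGrade.tensorGrade ih

theorem barTmul_mem_barDGrade {L : Type} [AddCommGroup L] [Module K L] {G : ℤ → Submodule K L}
    {i : ℕ} {p q d : ℤ} (h : p + q = d) {s : PS K n} (hs : s ∈ polyGrade K n p)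
    {x : barD K n L i} (hx : x ∈ barDGrade K n L G i q) :
    barTmul i s x ∈ barDGrade K n L G (i + 1) d :=
  tmul_mem_tensorGrade h hs hx

theorem barDGrade_succ_le {L : Type} [AddCommGroup L] [Module K L] {G : ℤ → Submodule K L}
    {i : ℕ} {d : ℤ} {U : Submodule K (barD K n L (i + 1))}
    (h : ∀ p q, p + q = d → ∀ s ∈ polyGrade K n p, ∀ x ∈ barDGrade K n L G i q,
      barTmul i s x ∈ U) : barDGrade K n L G (i + 1) d ≤ U :=
  tensorGrade_le h

section
variable [SetLike.GradedSMul (polyGrade K n) GN]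

theorem barAct_mem_barDGrade {i : ℕ} {p q : ℤ} {s : PS K n} (hs : s ∈ polyGrade K n p)
    {x : barD K n N i} (hx : x ∈ barDGrade K n N GN i q) :
    barAct s i x ∈ barDGrade K n N GN i (p + q) := by
  cases i with
  | zero => exact (inferInstance : SetLike.GradedSMul (polyGrade K n) GN).smul_mem hs hx
  | succ i =>
    rw [← Submodule.mem_comap]
    refine barDGrade_succ_le (fun p' q' hpq t ht y hy => ?_) hx
    rw [Submodule.mem_comap, barAct_barTmul]
    exact barTmul_mem_barDGrade (by lia) (mul_mem_polyGrade hs ht) hy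

theorem barC_mem_barDGrade {i : ℕ} {d : ℤ} {x : barD K n N (i + 1)}
    (hx : x ∈ barDGrade K n N GN (i + 1) d) : barC K n N i x ∈ barDGrade K n N GN i d := by
  rw [← Submodule.mem_comap]
  induction i generalizing d with
  | zero =>
    refine barDGrade_succ_le (fun p q hpq s hs y hy => ?_) hx
    rw [Submodule.mem_comap, barC_zero_barTmul, ← hpq]
    exact barAct_mem_barDGrade hs hy
  | succ i ih =>
    refine barDGrade_succ_le (fun p q hpq s hs y hy => ?_) hx
    rw [Submodule.mem_comap, barC_succ_barTmul, ← hpq]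
    exact sub_mem (barAct_mem_barDGrade hs hy) (barTmul_mem_barDGrade rfl hs (ih hy))

theorem map_barB_tensorGrade_le [SetLike.GradedSMul (polyGrade K n) GM] (i : ℕ) (d : ℤ) :
    (tensorGrade K GM (barDGrade K n N GN (i + 1)) d).map (barB K n N M i) ≤
      tensorGrade K GM (barDGrade K n N GN i) d := by
  rw [Submodule.map_le_iff_le_comap]
  refine tensorGrade_le fun p q hpq m hm y hy => ?_
  rw [Submodule.mem_comap, ← TensorProduct.mk_apply (R := K), ← LinearMap.comp_apply,
    ← Submodule.mem_comap]
  refine barDGrade_succ_le (fun p' q' hpq' s hs x hx => ?_) hy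
  rw [Submodule.mem_comap, LinearMap.comp_apply, TensorProduct.mk_apply, barB_tmul_barTmul]
  exact sub_mem
    (tmul_mem_tensorGrade (by rw [vadd_eq_add]; lia) (SetLike.GradedSMul.smul_mem hs hm) hx)
    (tmul_mem_tensorGrade hpq hm (barC_mem_barDGrade (barTmul_mem_barDGrade hpq' hs hx)))

end

theorem finrank_barDGrade_congr {L L' : Type} [AddCommGroup L] [Module K L] [AddCommGroup L']
    [Module K L'] {G : ℤ → Submodule K L} {G' : ℤ → Submodule K L'} (hG : IsNonnegGrading G)
    (hG' : IsNonnegGrading G')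
    (h : ∀ d, Module.finrank K (G d) = Module.finrank K (G' d)) (i : ℕ) (d : ℤ) :
    Module.finrank K (barDGrade K n L G i d) = Module.finrank K (barDGrade K n L' G' i d) := by
  induction i generalizing d with
  | zero => exact h d
  | succ i ih =>
    exact finrank_tensorGrade_congr isNonnegGrading_polyGrade isNonnegGrading_polyGrade
      (hG.barDGrade i) (hG'.barDGrade i) (fun _ => rfl) ih d

theorem range_barB_inf_tensorGrade [SetLike.GradedSMul (polyGrade K n) GN]
    [SetLike.GradedSMul (polyGrade K n) GM] (hN : IsNonnegGrading GN) (hM : IsNonnegGrading GM)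
    (i : ℕ) (d : ℤ) :
    LinearMap.range (barB K n N M i) ⊓ tensorGrade K GM (barDGrade K n N GN i) d =
      (tensorGrade K GM (barDGrade K n N GN (i + 1)) d).map (barB K n N M i) :=
  range_inf_eq_map (hM.tensorGrade (hN.barDGrade (i + 1))).isInternal.submodule_iSup_eq_top
    (hM.tensorGrade (hN.barDGrade i)).isInternal.submodule_iSupIndep
    (map_barB_tensorGrade_le i) d

end GradedBarComplex

section QuotientFormula

variable {K n}

/-- The projection `S → S/I` as a `K`-linear map. -/
abbrev quotMap (I : Ideal (PS K n)) : PS K n →ₗ[K] PS K n ⧸ I :=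
  (Ideal.Quotient.mkₐ K I).toLinearMap

/-- The degree `d` part `I_d` of an ideal, as a subspace of `S`. -/
def idealPart (I : Ideal (PS K n)) (d : ℤ) : Submodule K (PS K n) :=
  I.restrictScalars K ⊓ polyGrade K n d

theorem quotMap_surjective (I : Ideal (PS K n)) : Function.Surjective (quotMap I) :=
  Ideal.Quotient.mkₐ_surjective K I

theorem ker_quotMap (I : Ideal (PS K n)) : LinearMap.ker (quotMap I) = I.restrictScalars K :=
  Submodule.ext fun _ => Ideal.Quotient.eq_zero_iff_mem

theorem ker_quotMap_inf_polyGrade (I : Ideal (PS K n)) (d : ℤ) :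
    LinearMap.ker (quotMap I) ⊓ polyGrade K n d = idealPart I d := by
  rw [ker_quotMap, idealPart]

theorem IsHomog.isGradedSubspace_ker_quotMap {I : Ideal (PS K n)} (hI : IsHomog K n I) :
    IsGradedSubspace (polyGrade K n) (LinearMap.ker (quotMap I)) := by
  rw [ker_quotMap]
  refine le_antisymm (fun f hf => ?_) (iSup_le fun _ => inf_le_left)
  rw [← sum_homogeneousComponent f]
  refine Submodule.sum_mem _ fun d _ => Submodule.mem_iSup_of_mem (d : ℤ) ⟨hI f hf d, ?_⟩
  rw [SetLike.mem_coe, polyGrade_natCast]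
  exact homogeneousComponent_mem d f

instance (I : Ideal (PS K n)) : SetLike.GradedSMul (polyGrade K n) (quotGrade K n I) where
  smul_mem := by
    rintro p q s _ hs ⟨t, ht, rfl⟩
    exact ⟨s * t, mul_mem_polyGrade hs ht, rfl⟩

theorem IsHomog.isNonnegGrading_quotGrade {I : Ideal (PS K n)} (hI : IsHomog K n I) :
    IsNonnegGrading (quotGrade K n I) :=
  isNonnegGrading_polyGrade.map_of_surjective (quotMap_surjective I)
    hI.isGradedSubspace_ker_quotMap

variable (K n) in
/-- The degree `j` piece of `S ⊗ D_i(S)`, the term of the bar complex computing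
`Tor_i(S, S)_j`. -/
def barPiece (i : ℕ) (j : ℤ) : Submodule K (PS K n ⊗[K] barD K n (PS K n) i) :=
  tensorGrade K (polyGrade K n) (barDGrade K n (PS K n) (polyGrade K n) i) j

/-- The degree `j` piece of `S/I ⊗ D_i(S/J)`, the term of the bar complex computing
`Tor_i(S/I, S/J)_j`. -/
def quotBarPiece (I J : Ideal (PS K n)) (i : ℕ) (j : ℤ) :
    Submodule K ((PS K n ⧸ I) ⊗[K] barD K n (PS K n ⧸ J) i) :=
  tensorGrade K (quotGrade K n I) (barDGrade K n (PS K n ⧸ J) (quotGrade K n J) i) j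

/-- The degree `j` piece of the kernel of `S ⊗ D_i(S) → S/I ⊗ D_i(S/J)`. -/
def barRel (I J : Ideal (PS K n)) (i : ℕ) (j : ℤ) :
    Submodule K (PS K n ⊗[K] barD K n (PS K n) i) :=
  tensorGrade K (idealPart I) (barDGrade K n (PS K n) (polyGrade K n) i) j ⊔
    tensorGrade K (polyGrade K n) (barDGrade K n (PS K n) (idealPart J) i) j

/-- The preimage in `S ⊗ D_i(S)` of the degree `j` boundaries of the bar complex computing
`Tor_i(S/I, S/J)`. -/
def barRelBoundaries (I J : Ideal (PS K n)) (i : ℕ) (j : ℤ) :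
    Submodule K (PS K n ⊗[K] barD K n (PS K n) i) :=
  (barPiece K n (i + 1) j).map (barB K n (PS K n) (PS K n) i) ⊔ barRel I J i j

/-- The projection `D_i(S) → D_i(S/J)`. -/
abbrev barQuotMap (J : Ideal (PS K n)) (i : ℕ) :
    barD K n (PS K n) i →ₗ[K] barD K n (PS K n ⧸ J) i :=
  barMap (AlgHom.id K (PS K n)) (quotMap J) i

theorem barQuotMap_surjective (J : Ideal (PS K n)) (i : ℕ) :
    Function.Surjective (barQuotMap J i) :=
  barMap_surjective Function.surjective_id (quotMap_surjective J) i

theorem map_barPiece (I J : Ideal (PS K n)) (i : ℕ) (j : ℤ) :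
    (barPiece K n i j).map (TensorProduct.map (quotMap I) (barQuotMap J i)) =
      quotBarPiece I J i j :=
  map_tensorGrade_barDGrade (fun _ => Submodule.map_id _) (quotMap J) (quotMap I) _ _ i j

instance (i : ℕ) (j : ℤ) : FiniteDimensional K (barPiece K n i j) :=
  (isNonnegGrading_polyGrade.tensorGrade
    (isNonnegGrading_polyGrade.barDGrade i)).finiteDimensional j

theorem isGradedSubspace_ker_id {A : Type} [AddCommGroup A] [Module K A]
    (G : ℤ → Submodule K A) : IsGradedSubspace G (LinearMap.ker (LinearMap.id : A →ₗ[K] A)) := by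
  simp [IsGradedSubspace]

variable {I J : Ideal (PS K n)}

theorem isGradedSubspace_ker_barQuotMap (hJ : IsHomog K n J) (i : ℕ) :
    IsGradedSubspace (barDGrade K n (PS K n) (polyGrade K n) i)
      (LinearMap.ker (barQuotMap J i)) := by
  induction i with
  | zero => exact hJ.isGradedSubspace_ker_quotMap
  | succ i ih =>
    exact isGradedSubspace_ker_map isNonnegGrading_polyGrade.isInternal.submodule_iSup_eq_top
      (isNonnegGrading_polyGrade.barDGrade i).isInternal.submodule_iSup_eq_top
      Function.surjective_id (barQuotMap_surjective J i) (isGradedSubspace_ker_id _) ih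

theorem ker_barQuotMap_inf_barDGrade (hJ : IsHomog K n J) (i : ℕ) :
    (fun d => LinearMap.ker (barQuotMap J i) ⊓ barDGrade K n (PS K n) (polyGrade K n) i d) =
      barDGrade K n (PS K n) (idealPart J) i := by
  induction i with
  | zero => exact funext (ker_quotMap_inf_polyGrade J)
  | succ i ih =>
    funext d
    refine (ker_map_inf_tensorGrade isNonnegGrading_polyGrade.isInternal
      (isNonnegGrading_polyGrade.barDGrade i).isInternal Function.surjective_id
      (barQuotMap_surjective J i) (isGradedSubspace_ker_id _)
      (isGradedSubspace_ker_barQuotMap hJ i) d).trans ?_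
    rw [ih]
    refine sup_eq_right.2 (tensorGrade_le fun p q _ a ha b _ => ?_)
    obtain rfl : a = 0 := ha.1
    rw [zero_tmul]
    exact zero_mem _

theorem ker_map_inf_barPiece (hI : IsHomog K n I) (hJ : IsHomog K n J) (i : ℕ) (j : ℤ) :
    LinearMap.ker (TensorProduct.map (quotMap I) (barQuotMap J i)) ⊓ barPiece K n i j =
      barRel I J i j := by
  rw [barPiece, ker_map_inf_tensorGrade isNonnegGrading_polyGrade.isInternal
    (isNonnegGrading_polyGrade.barDGrade i).isInternal (quotMap_surjective I)
    (barQuotMap_surjective J i) hI.isGradedSubspace_ker_quotMap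
    (isGradedSubspace_ker_barQuotMap hJ i) j, ker_barQuotMap_inf_barDGrade hJ]
  simp only [ker_quotMap_inf_polyGrade]
  rfl

theorem finrank_quotBarPiece_add_finrank_barRel (hI : IsHomog K n I) (hJ : IsHomog K n J) (i : ℕ)
    (j : ℤ) :
    Module.finrank K (quotBarPiece I J i j) + Module.finrank K (barRel I J i j) =
      Module.finrank K (barPiece K n i j) := by
  rw [← map_barPiece, ← ker_map_inf_barPiece hI hJ, finrank_map_add_finrank_ker_inf]

theorem barRelBoundaries_le_barPiece (hI : IsHomog K n I) (hJ : IsHomog K n J) (i : ℕ) (j : ℤ) :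
    barRelBoundaries I J i j ≤ barPiece K n i j := by
  refine sup_le (map_barB_tensorGrade_le i j) ?_
  rw [← ker_map_inf_barPiece hI hJ]
  exact inf_le_right

theorem map_barRelBoundaries (hI : IsHomog K n I) (hJ : IsHomog K n J) (i : ℕ) (j : ℤ) :
    (barRelBoundaries I J i j).map (TensorProduct.map (quotMap I) (barQuotMap J i)) =
      (quotBarPiece I J (i + 1) j).map (barB K n (PS K n ⧸ J) (PS K n ⧸ I) i) := by
  have hcomm : TensorProduct.map (quotMap I) (barQuotMap J i) ∘ₗ barB K n (PS K n) (PS K n) i =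
      barB K n (PS K n ⧸ J) (PS K n ⧸ I) i ∘ₗ
        TensorProduct.map (quotMap I) (barQuotMap J (i + 1)) :=
    map_comp_barB (fun _ _ => rfl) (fun _ _ => rfl) i
  have hrel : (barRel I J i j).map (TensorProduct.map (quotMap I) (barQuotMap J i)) = ⊥ := by
    rw [← ker_map_inf_barPiece hI hJ, eq_bot_iff, Submodule.map_le_iff_le_comap]
    exact inf_le_left
  rw [barRelBoundaries, Submodule.map_sup, hrel, sup_bot_eq, ← Submodule.map_comp, hcomm,
    Submodule.map_comp, map_barPiece]

variable (I J) in
/-- The rank of the degree `j` strand of the bar differential `b_i` of `S/I` and `S/J`. -/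
def barRank (i : ℕ) (j : ℤ) : ℕ :=
  Module.finrank K ((quotBarPiece I J (i + 1) j).map (barB K n (PS K n ⧸ J) (PS K n ⧸ I) i))

theorem barRank_add_finrank_barRel (hI : IsHomog K n I) (hJ : IsHomog K n J) (i : ℕ) (j : ℤ) :
    barRank I J i j + Module.finrank K (barRel I J i j) =
      Module.finrank K (barRelBoundaries I J i j) := by
  have hle := barRelBoundaries_le_barPiece hI hJ i j
  have := Submodule.finiteDimensional_of_le hle
  have hker : LinearMap.ker (TensorProduct.map (quotMap I) (barQuotMap J i)) ⊓
      barRelBoundaries I J i j = barRel I J i j := by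
    refine le_antisymm ((inf_le_inf_left _ hle).trans (ker_map_inf_barPiece hI hJ i j).le)
      (le_inf ?_ le_sup_right)
    rw [← ker_map_inf_barPiece hI hJ]
    exact inf_le_left
  rw [barRank, ← map_barRelBoundaries hI hJ, ← hker]
  exact finrank_map_add_finrank_ker_inf _ _

theorem torQQ_zero (hI : IsHomog K n I) (hJ : IsHomog K n J) (j : ℤ) :
    torQQ K n I J 0 j = Module.finrank K (quotBarPiece I J 0 j) - barRank I J 0 j := by
  rw [torQQ, torStrandDim, range_barB_inf_tensorGrade hJ.isNonnegGrading_quotGrade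
    hI.isNonnegGrading_quotGrade]
  rfl

theorem torQQ_succ (hI : IsHomog K n I) (hJ : IsHomog K n J) (i : ℕ) (j : ℤ) :
    torQQ K n I J (i + 1) j =
      Module.finrank K (quotBarPiece I J (i + 1) j) - barRank I J i j - barRank I J (i + 1) j := by
  have : FiniteDimensional K (quotBarPiece I J (i + 1) j) := by
    rw [← map_barPiece]
    infer_instance
  rw [barRank, ← finrank_map_add_finrank_ker_inf (barB K n (PS K n ⧸ J) (PS K n ⧸ I) i)
    (quotBarPiece I J (i + 1) j), Nat.add_sub_cancel_left, torQQ, torStrandDim,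
    range_barB_inf_tensorGrade hJ.isNonnegGrading_quotGrade hI.isNonnegGrading_quotGrade]
  rfl

theorem torQQ_le_of_finrank_barRelBoundaries_le {I' J' : Ideal (PS K n)} (hI : IsHomog K n I)
    (hJ : IsHomog K n J) (hI' : IsHomog K n I') (hJ' : IsHomog K n J')
    (hII' : ∀ d, Module.finrank K (quotGrade K n I d) = Module.finrank K (quotGrade K n I' d))
    (hJJ' : ∀ d, Module.finrank K (quotGrade K n J d) = Module.finrank K (quotGrade K n J' d))
    {i : ℕ} {j : ℤ} (h : ∀ k ≤ i, Module.finrank K (barRelBoundaries I' J' k j) ≤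
      Module.finrank K (barRelBoundaries I J k j)) :
    torQQ K n I J i j ≤ torQQ K n I' J' i j := by
  have hpiece (k : ℕ) :
      Module.finrank K (quotBarPiece I J k j) = Module.finrank K (quotBarPiece I' J' k j) :=
    finrank_tensorGrade_congr hI.isNonnegGrading_quotGrade hI'.isNonnegGrading_quotGrade
      (hJ.isNonnegGrading_quotGrade.barDGrade k) (hJ'.isNonnegGrading_quotGrade.barDGrade k) hII'
      (finrank_barDGrade_congr hJ.isNonnegGrading_quotGrade hJ'.isNonnegGrading_quotGrade hJJ' k) j
  have hrank (k : ℕ) (hk : k ≤ i) : barRank I' J' k j ≤ barRank I J k j := by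
    have hrel := finrank_quotBarPiece_add_finrank_barRel hI hJ k j
    have hrel' := finrank_quotBarPiece_add_finrank_barRel hI' hJ' k j
    have hbd := barRank_add_finrank_barRel hI hJ k j
    have hbd' := barRank_add_finrank_barRel hI' hJ' k j
    have := hpiece k
    have := h k hk
    omega
  cases i with
  | zero =>
    rw [torQQ_zero hI hJ, torQQ_zero hI' hJ', hpiece]
    exact Nat.sub_le_sub_left (hrank 0 le_rfl) _
  | succ i =>
    rw [torQQ_succ hI hJ, torQQ_succ hI' hJ', hpiece]
    exact tsub_le_tsub (Nat.sub_le_sub_left (hrank i i.le_succ) _) (hrank (i + 1) le_rfl)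

theorem torQQ_eq_zero {i : ℕ} {j : ℤ} (hij : j < i) : torQQ K n I J i j = 0 := by
  have hneg (I : Ideal (PS K n)) (d : ℤ) (hd : d < 0) : quotGrade K n I d = ⊥ := by
    rw [quotGrade, polyGrade_of_neg hd, Submodule.map_bot]
  exact torStrandDim_eq_zero (hneg I) (hneg J) hij

end QuotientFormula

section PolynomialFamily

variable {K n}
variable {T X Y : Type} [AddCommGroup X] [Module K X] [AddCommGroup Y] [Module K Y]
variable (P : Subalgebra K (T → K)) (t₀ : T)

/-- The sections of a family `U` of subspaces of `X` whose coordinates belong to the algebra `P`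
of functions on the parameter space; `X` may be infinite dimensional, so that coordinates are
replaced by arbitrary linear functionals. -/
def regularSections (U : T → Submodule K X) : Submodule K (T → X) :=
  (⨅ l : X →ₗ[K] K, (Subalgebra.toSubmodule P).comap (l.compLeft T)) ⊓ Submodule.pi Set.univ U

/-- A family `U` of subspaces is regular at `t₀` if every vector of `U t₀` extends to a regular
section. -/
def IsRegularFamily (U : T → Submodule K X) : Prop :=
  U t₀ ≤ (regularSections P U).map (LinearMap.proj t₀)

variable {P t₀}

theorem mem_regularSections {U : T → Submodule K X} {v : T → X} :
    v ∈ regularSections P U ↔ (∀ l : X →ₗ[K] K, (fun t => l (v t)) ∈ P) ∧ ∀ t, v t ∈ U t := by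
  simp only [regularSections, Submodule.mem_inf, Submodule.mem_iInf, Submodule.mem_pi,
    Set.mem_univ, true_imp_iff]
  rfl

theorem regularSections_mono {U U' : T → Submodule K X} (h : U ≤ U') :
    regularSections P U ≤ regularSections P U' :=
  inf_le_inf_left _ (Submodule.pi_mono fun t _ => h t)

theorem isRegularFamily_const (U : Submodule K X) : IsRegularFamily P t₀ fun _ => U := fun x hx =>
  ⟨fun _ => x, mem_regularSections.2 ⟨fun l => P.algebraMap_mem (l x), fun _ => hx⟩, rfl⟩

theorem IsRegularFamily.sup {U U' : T → Submodule K X} (h : IsRegularFamily P t₀ U)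
    (h' : IsRegularFamily P t₀ U') : IsRegularFamily P t₀ fun t => U t ⊔ U' t :=
  sup_le (h.trans (Submodule.map_mono (regularSections_mono fun _ => le_sup_left)))
    (h'.trans (Submodule.map_mono (regularSections_mono fun _ => le_sup_right)))

theorem IsRegularFamily.tensorGrade_right {U : T → ℤ → Submodule K X}
    (h : ∀ d, IsRegularFamily P t₀ fun t => U t d) (G : ℤ → Submodule K Y) (d : ℤ) :
    IsRegularFamily P t₀ fun t => tensorGrade K (U t) G d := by
  refine tensorGrade_le fun p q hpq a ha b hb => ?_
  obtain ⟨v, hv, rfl⟩ := h p ha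
  rw [SetLike.mem_coe, mem_regularSections] at hv
  exact ⟨fun t => v t ⊗ₜ b,
    mem_regularSections.2 ⟨fun l => hv.1 (l ∘ₗ (TensorProduct.mk K X Y).flip b),
      fun t => tmul_mem_tensorGrade hpq (hv.2 t) hb⟩, rfl⟩

theorem IsRegularFamily.tensorGrade_left {U : T → ℤ → Submodule K Y}
    (h : ∀ d, IsRegularFamily P t₀ fun t => U t d) (G : ℤ → Submodule K X) (d : ℤ) :
    IsRegularFamily P t₀ fun t => tensorGrade K G (U t) d := by
  refine tensorGrade_le fun p q hpq a ha b hb => ?_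
  obtain ⟨v, hv, rfl⟩ := h q hb
  rw [SetLike.mem_coe, mem_regularSections] at hv
  exact ⟨fun t => a ⊗ₜ v t,
    mem_regularSections.2 ⟨fun l => hv.1 (l ∘ₗ TensorProduct.mk K X Y a),
      fun t => tmul_mem_tensorGrade hpq ha (hv.2 t)⟩, rfl⟩

theorem det_mem_of_entries_mem {ι : Type*} [Fintype ι] [DecidableEq ι] {A : T → Matrix ι ι K}
    (hA : ∀ i j, (fun t => A t i j) ∈ P) : (fun t => (A t).det) ∈ P := by
  have hdet : (fun t => (A t).det) =
      ∑ σ : Equiv.Perm ι, (Equiv.Perm.sign σ : ℤ) • ∏ i, fun t => A t (σ i) i := by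
    ext t
    simp [Matrix.det_apply, Units.smul_def]
  rw [hdet]
  exact sum_mem fun σ _ => zsmul_mem (prod_mem fun i _ => hA _ _) _

theorem linearIndependent_of_det_ne_zero {ι : Type*} [Fintype ι] [DecidableEq ι] {v : ι → X}
    {l : ι → X →ₗ[K] K} (h : (Matrix.of fun i j => l j (v i)).det ≠ 0) : LinearIndependent K v :=
  .of_comp (LinearMap.pi l) (Matrix.linearIndependent_rows_of_det_ne_zero h)

theorem exists_linearMap_apply_eq_single {ι : Type*} [DecidableEq ι] {U : Submodule K X}
    (b : Module.Basis ι K U) :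
    ∃ l : ι → X →ₗ[K] K, ∀ i j, l j (b i) = (1 : Matrix ι ι K) i j := by
  obtain ⟨L, hL⟩ := U.subtype.exists_leftInverse_of_injective U.ker_subtype
  refine ⟨fun j => b.coord j ∘ₗ L, fun i j => ?_⟩
  have hLb : L (b i) = b i := LinearMap.congr_fun hL (b i)
  rw [LinearMap.comp_apply, hLb, Module.Basis.coord_apply, Module.Basis.repr_self,
    Finsupp.single_apply, Matrix.one_apply]

theorem IsRegularFamily.exists_finrank_le {U : T → Submodule K X} (h : IsRegularFamily P t₀ U)
    (hfin : ∀ t, FiniteDimensional K (U t)) :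
    ∃ F ∈ P, F t₀ ≠ 0 ∧ ∀ t, F t ≠ 0 → Module.finrank K (U t₀) ≤ Module.finrank K (U t) := by
  have := hfin t₀
  let b := Module.finBasis K (U t₀)
  choose v hv hv₀ using fun i => h (b i).2
  simp only [SetLike.mem_coe, mem_regularSections] at hv
  obtain ⟨l, hl⟩ := exists_linearMap_apply_eq_single b
  -- `F` is a maximal minor of regular sections extending a basis of `U t₀`.
  refine ⟨fun t => (Matrix.of fun i j => l j (v i t)).det,
    det_mem_of_entries_mem fun i j => (hv i).1 (l j), ?_, fun t ht => ?_⟩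
  · have hone : (Matrix.of fun i j => l j (v i t₀)) = 1 := by
      ext i j
      rw [Matrix.of_apply, ← hl i j, ← hv₀ i, LinearMap.proj_apply]
    simp only [hone, Matrix.det_one, ne_eq, one_ne_zero, not_false_eq_true]
  · have := hfin t
    have hli : LinearIndependent K fun i => (⟨v i t, (hv i).2 t⟩ : U t) :=
      .of_comp (U t).subtype (linearIndependent_of_det_ne_zero ht)
    simpa using hli.fintype_card_le_finrank

end PolynomialFamily

section IdealFamily

variable {K n}
variable {T : Type} (P : Subalgebra K (T → K)) (t₀ : T)

/-- A family of homogeneous ideals is flat at `t₀`, with respect to the algebra `P` of functions on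
the parameter space, if its Hilbert function is constant and its graded pieces are regular
at `t₀`. -/
structure IsFlatFamily (I : T → Ideal (PS K n)) : Prop where
  isHomog : ∀ t, IsHomog K n (I t)
  finrank_idealPart : ∀ t d,
    Module.finrank K (idealPart (I t) d) = Module.finrank K (idealPart (I t₀) d)
  isRegularFamily : ∀ d, IsRegularFamily P t₀ fun t => idealPart (I t) d

variable {P t₀} {I J : T → Ideal (PS K n)}

theorem isFlatFamily_const {I : Ideal (PS K n)} (hI : IsHomog K n I) :
    IsFlatFamily P t₀ fun _ => I where
  isHomog _ := hI
  finrank_idealPart _ _ := rfl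
  isRegularFamily _ := isRegularFamily_const _

theorem finrank_quotGrade_add_finrank_idealPart (I : Ideal (PS K n)) (d : ℤ) :
    Module.finrank K (quotGrade K n I d) + Module.finrank K (idealPart I d) =
      Module.finrank K (polyGrade K n d) := by
  have := (isNonnegGrading_polyGrade (K := K) (n := n)).finiteDimensional d
  rw [← ker_quotMap_inf_polyGrade]
  exact finrank_map_add_finrank_ker_inf _ _

theorem IsFlatFamily.finrank_quotGrade (hI : IsFlatFamily P t₀ I) (t : T) (d : ℤ) :
    Module.finrank K (quotGrade K n (I t) d) = Module.finrank K (quotGrade K n (I t₀) d) := by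
  have h := finrank_quotGrade_add_finrank_idealPart (I t) d
  have h₀ := finrank_quotGrade_add_finrank_idealPart (I t₀) d
  have := hI.finrank_idealPart t d
  omega

theorem isRegularFamily_barDGrade_idealPart
    (hJ : ∀ d, IsRegularFamily P t₀ fun t => idealPart (J t) d) (i : ℕ) (d : ℤ) :
    IsRegularFamily P t₀ fun t => barDGrade K n (PS K n) (idealPart (J t)) i d := by
  induction i generalizing d with
  | zero => exact hJ d
  | succ i ih => exact .tensorGrade_left ih (polyGrade K n) d

theorem isRegularFamily_barRelBoundaries
    (hI : ∀ d, IsRegularFamily P t₀ fun t => idealPart (I t) d)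
    (hJ : ∀ d, IsRegularFamily P t₀ fun t => idealPart (J t) d) (i : ℕ) (j : ℤ) :
    IsRegularFamily P t₀ fun t => barRelBoundaries (I t) (J t) i j :=
  (isRegularFamily_const _).sup <| .sup (.tensorGrade_right hI _ j)
    (.tensorGrade_left (isRegularFamily_barDGrade_idealPart hJ i) _ j)

theorem IsFlatFamily.exists_torQQ_le (hI : IsFlatFamily P t₀ I) (hJ : IsFlatFamily P t₀ J)
    (j : ℤ) : ∃ F ∈ P, F t₀ ≠ 0 ∧ ∀ t, F t ≠ 0 → ∀ i,
      torQQ K n (I t) (J t) i j ≤ torQQ K n (I t₀) (J t₀) i j := by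
  have hfin (i : ℕ) (t : T) : FiniteDimensional K (barRelBoundaries (I t) (J t) i j) :=
    Submodule.finiteDimensional_of_le
      (barRelBoundaries_le_barPiece (hI.isHomog t) (hJ.isHomog t) i j)
  choose F hFP hF₀ hF using fun i => (isRegularFamily_barRelBoundaries hI.isRegularFamily
    hJ.isRegularFamily i j).exists_finrank_le (hfin i)
  refine ⟨∏ i ∈ Finset.range (j.toNat + 1), F i, prod_mem fun i _ => hFP i, ?_, fun t ht i => ?_⟩
  · rw [Finset.prod_apply, Finset.prod_ne_zero_iff]
    exact fun i _ => hF₀ i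
  · rw [Finset.prod_apply, Finset.prod_ne_zero_iff] at ht
    obtain hij | hij := lt_or_ge j i
    · rw [torQQ_eq_zero hij]
      exact Nat.zero_le _
    · exact torQQ_le_of_finrank_barRelBoundaries_le (hI.isHomog t) (hJ.isHomog t) (hI.isHomog t₀)
        (hJ.isHomog t₀) (hI.finrank_quotGrade t) (hJ.finrank_quotGrade t)
        fun k hk => hF k t (ht k (Finset.mem_range.2 (by omega)))

end IdealFamily

section CoordinateChange

variable {K n} (g h : GL (Fin n) K)

theorem coordChange_X (i : Fin n) :
    coordChange K n g (X i) = ∑ j, ((g : Matrix (Fin n) (Fin n) K) j i) • X j :=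
  aeval_X _ i

theorem coordChange_mul :
    coordChange K n (g * h) = (coordChange K n g).comp (coordChange K n h) := by
  ext1 i
  simp only [AlgHom.comp_apply, coordChange_X, map_sum, map_smul, Finset.smul_sum, smul_smul,
    Units.val_mul, Matrix.mul_apply, Finset.sum_smul]
  rw [Finset.sum_comm]
  simp only [mul_comm]

theorem coordChange_one : coordChange K n 1 = AlgHom.id K (PS K n) := by
  ext1 i
  simp [coordChange_X, Matrix.one_apply]

/-- The change of coordinates induced by `g` as an automorphism of `S`. -/
def coordEquiv : PS K n ≃ₐ[K] PS K n :=
  AlgEquiv.ofAlgHom (coordChange K n g) (coordChange K n g⁻¹)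
    (by rw [← coordChange_mul, mul_inv_cancel, coordChange_one])
    (by rw [← coordChange_mul, inv_mul_cancel, coordChange_one])

theorem coordChange_bijective : Function.Bijective (coordChange K n g) :=
  (coordEquiv g).bijective

theorem coordChange_inv_apply (f : PS K n) :
    coordChange K n g⁻¹ (coordChange K n g f) = f :=
  (coordEquiv g).symm_apply_apply f

theorem coordChange_apply_inv (f : PS K n) :
    coordChange K n g (coordChange K n g⁻¹ f) = f :=
  (coordEquiv g).apply_symm_apply f

theorem coordChange_mem_polyGrade {d : ℤ} {f : PS K n} (hf : f ∈ polyGrade K n d) :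
    coordChange K n g f ∈ polyGrade K n d := by
  obtain hd | hd := lt_or_ge d 0
  · rw [polyGrade_of_neg hd, Submodule.mem_bot] at hf
    rw [hf, map_zero]
    exact zero_mem _
  · lift d to ℕ using hd
    rw [polyGrade_natCast, mem_homogeneousSubmodule] at hf ⊢
    rw [← one_mul d]
    refine hf.aeval _ fun i => IsHomogeneous.sum _ _ _ fun j _ => ?_
    exact (homogeneousSubmodule (Fin n) K 1).smul_mem _ (isHomogeneous_X K j)

theorem map_coordChange_polyGrade (d : ℤ) :
    (polyGrade K n d).map (coordChange K n g).toLinearMap = polyGrade K n d :=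
  le_antisymm (Submodule.map_le_iff_le_comap.2 fun _ => coordChange_mem_polyGrade g)
    fun f hf => ⟨_, coordChange_mem_polyGrade g⁻¹ hf, coordChange_apply_inv g f⟩

theorem homogeneousComponent_coordChange (d : ℕ) (f : PS K n) :
    homogeneousComponent d (coordChange K n g f) =
      coordChange K n g (homogeneousComponent d f) := by
  induction f using MvPolynomial.induction_on' with
  | add p q hp hq => simp only [map_add, hp, hq]
  | monomial m c =>
    have hm := coordChange_mem_polyGrade g (monomial_mem_polyGrade m c)
    rw [polyGrade_natCast] at hm
    rw [homogeneousComponent_of_mem hm, homogeneousComponent_of_mem (isHomogeneous_monomial c rfl),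
      apply_ite (coordChange K n g), map_zero]

theorem mem_map_coordChange {J : Ideal (PS K n)} {f : PS K n} :
    f ∈ J.map (coordChange K n g) ↔ coordChange K n g⁻¹ f ∈ J := by
  rw [Ideal.mem_map_iff_of_surjective _ (coordChange_bijective g).2]
  constructor
  · rintro ⟨x, hx, rfl⟩
    rwa [coordChange_inv_apply]
  · exact fun hf => ⟨_, hf, coordChange_apply_inv g f⟩

theorem map_coordChange_mul (J : Ideal (PS K n)) :
    J.map (coordChange K n (g * h)) = (J.map (coordChange K n h)).map (coordChange K n g) := by
  rw [coordChange_mul]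
  exact (Ideal.map_mapₐ _ _).symm

theorem IsHomog.map_coordChange {J : Ideal (PS K n)} (hJ : IsHomog K n J) :
    IsHomog K n (J.map (coordChange K n g)) := by
  intro f hf d
  rw [mem_map_coordChange] at hf ⊢
  rw [← homogeneousComponent_coordChange]
  exact hJ _ hf d

theorem map_coordChange_idealPart (J : Ideal (PS K n)) (d : ℤ) :
    (idealPart J d).map (coordChange K n g).toLinearMap =
      idealPart (J.map (coordChange K n g)) d := by
  rw [idealPart, Submodule.map_inf _ (coordChange_bijective g).1, map_coordChange_polyGrade]
  congr 1
  ext f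
  exact (Ideal.mem_map_iff_of_surjective _ (coordChange_bijective g).2).symm

theorem finrank_idealPart_map_coordChange (J : Ideal (PS K n)) (d : ℤ) :
    Module.finrank K (idealPart (J.map (coordChange K n g)) d) =
      Module.finrank K (idealPart J d) := by
  rw [← map_coordChange_idealPart]
  exact (Submodule.equivMapOfInjective _ (coordChange_bijective g).1 _).finrank_eq.symm

theorem torQQ_map_coordChange (I J : Ideal (PS K n)) (i : ℕ) (j : ℤ) :
    torQQ K n (I.map (coordChange K n g)) (J.map (coordChange K n g)) i j = torQQ K n I J i j := by
  let e (I : Ideal (PS K n)) : (PS K n ⧸ I) ≃ₐ[K] PS K n ⧸ I.map (coordChange K n g) :=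
    Ideal.quotientEquivAlg I _ (coordEquiv g) rfl
  have hsmul (I : Ideal (PS K n)) (s : PS K n) (x : PS K n ⧸ I) :
      e I (s • x) = coordChange K n g s • e I x := by
    obtain ⟨f, rfl⟩ := quotMap_surjective I x
    exact map_mul (e I) (quotMap I s) (quotMap I f)
  have hgrade (I : Ideal (PS K n)) : (fun d => (quotGrade K n I d).map (e I).toLinearMap) =
      quotGrade K n (I.map (coordChange K n g)) := by
    funext d
    conv_rhs => rw [quotGrade, ← map_coordChange_polyGrade g d, ← Submodule.map_comp]
    rw [quotGrade, ← Submodule.map_comp]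
    rfl
  rw [torQQ, torQQ, ← hgrade, ← hgrade]
  exact torStrandDim_map (coordChange_bijective g) (map_coordChange_polyGrade g) (hsmul J) (hsmul I)
    (e J).bijective (e I).bijective _ _ i j

end CoordinateChange

section GeneralLinearFamily

variable {K n}

variable (K n) in
/-- The polynomial functions in the entries of the matrix, on `GL_n(K)`. -/
def matrixPolynomials : Subalgebra K (GL (Fin n) K → K) :=
  (aeval fun (p : Fin n × Fin n) (g : GL (Fin n) K) =>
    (g : Matrix (Fin n) (Fin n) K) p.1 p.2).range

theorem mem_matrixPolynomials {F : GL (Fin n) K → K} :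
    F ∈ matrixPolynomials K n ↔ ∃ p : MvPolynomial (Fin n × Fin n) K, ∀ g : GL (Fin n) K,
      eval (fun p => (g : Matrix (Fin n) (Fin n) K) p.1 p.2) p = F g := by
  refine exists_congr fun p => funext_iff.trans <| forall_congr' fun g => ?_
  have heval := comp_aeval_apply (fun (p : Fin n × Fin n) (g : GL (Fin n) K) =>
    (g : Matrix (Fin n) (Fin n) K) p.1 p.2) (Pi.evalAlgHom K (fun _ => K) g) p
  exact Eq.congr_left heval

theorem coordChange_apply_mem_matrixPolynomials (f : PS K n) (l : PS K n →ₗ[K] K) :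
    (fun g => l (coordChange K n g f)) ∈ matrixPolynomials K n := by
  induction f using MvPolynomial.induction_on generalizing l with
  | C a =>
    simp only [← algebraMap_eq, AlgHom.commutes]
    exact (matrixPolynomials K n).algebraMap_mem _
  | add p q hp hq =>
    simp only [map_add]
    exact add_mem (hp l) (hq l)
  | mul_X p i hp =>
    have hsum : (fun g => l (coordChange K n g (p * X i))) =
        ∑ j, (fun g : GL (Fin n) K => (g : Matrix (Fin n) (Fin n) K) j i) *
          fun g => (l ∘ₗ LinearMap.mulRight K (X j)) (coordChange K n g p) := by
      ext g
      simp [coordChange_X, Finset.mul_sum]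
    rw [hsum]
    refine sum_mem fun j _ => mul_mem ?_ (hp _)
    exact mem_matrixPolynomials.2 ⟨X (j, i), fun g => eval_X _⟩

theorem isFlatFamily_map_coordChange {J : Ideal (PS K n)} (hJ : IsHomog K n J)
    (g₀ : GL (Fin n) K) :
    IsFlatFamily (matrixPolynomials K n) g₀ fun g => J.map (coordChange K n g) where
  isHomog g := hJ.map_coordChange g
  finrank_idealPart g d := by simp only [finrank_idealPart_map_coordChange]
  isRegularFamily d := by
    rintro x (hx : x ∈ idealPart (J.map (coordChange K n g₀)) d)
    rw [← map_coordChange_idealPart] at hx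
    obtain ⟨f, hf, rfl⟩ := hx
    refine ⟨fun g => coordChange K n g f,
      mem_regularSections.2 ⟨coordChange_apply_mem_matrixPolynomials f, fun g => ?_⟩, rfl⟩
    rw [← map_coordChange_idealPart]
    exact ⟨f, hf, rfl⟩

theorem generally_torQQ_map_coordChange_le {I J : Ideal (PS K n)} (hI : IsHomog K n I)
    (hJ : IsHomog K n J) (g₀ : GL (Fin n) K) (j : ℤ) :
    generally K n fun g => ∀ i, torQQ K n I (J.map (coordChange K n g)) i j ≤
      torQQ K n I (J.map (coordChange K n g₀)) i j := by
  obtain ⟨F, hFP, hF₀, hF⟩ :=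
    (isFlatFamily_const hI).exists_torQQ_le (isFlatFamily_map_coordChange hJ g₀) j
  obtain ⟨p, hp⟩ := mem_matrixPolynomials.1 hFP
  refine ⟨p, ?_, fun g hg => hF g (hp g ▸ hg)⟩
  rintro rfl
  exact hF₀ ((hp g₀).symm.trans (map_zero _))

end GeneralLinearFamily

section LeadingForms

variable {K} {σ : Type*} (w : σ → ℕ)

variable (K) in
/-- The polynomials all of whose terms have `w`-weight less than `c`. -/
def weightLT (c : ℕ) : Submodule K (MvPolynomial σ K) :=
  restrictSupport K {m | Finsupp.weight w m < c}

/-- The components of `w`-weight `c` of the elements of `U` whose terms have weight at most `c`. -/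
def leadingForms (U : Submodule K (MvPolynomial σ K)) (c : ℕ) : Submodule K (MvPolynomial σ K) :=
  (U ⊓ weightLT K w (c + 1)).map (weightedHomogeneousComponent w c)

variable {w}

theorem mem_weightLT {c : ℕ} {f : MvPolynomial σ K} :
    f ∈ weightLT K w c ↔ ∀ m ∈ f.support, Finsupp.weight w m < c :=
  mem_restrictSupport_iff K

theorem weightLT_mono : Monotone (weightLT K w) := fun _ _ h =>
  restrictSupport_mono K fun _ hm => hm.trans_le h

theorem mem_weightLT_weightedTotalDegree_succ (f : MvPolynomial σ K) :
    f ∈ weightLT K w (weightedTotalDegree w f + 1) :=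
  mem_weightLT.2 fun _ hm => Nat.lt_succ_of_le (le_weightedTotalDegree w hm)

theorem weightLT_zero : weightLT K w 0 = ⊥ := by
  simp [weightLT, restrictSupport_eq_span]

theorem weightedHomogeneousComponent_mem_weightLT (f : MvPolynomial σ K) (c : ℕ) :
    weightedHomogeneousComponent w c f ∈ weightLT K w (c + 1) := by
  rw [mem_weightLT, support_weightedHomogeneousComponent]
  intro m hm
  rw [(Finset.mem_filter.1 hm).2]
  exact c.lt_succ_self

theorem weightedHomogeneousComponent_mem_weightLT_of_mem {v : σ → ℕ} {f : MvPolynomial σ K} {c : ℕ}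
    (hf : f ∈ weightLT K w c) (d : ℕ) : weightedHomogeneousComponent v d f ∈ weightLT K w c := by
  rw [mem_weightLT, support_weightedHomogeneousComponent] at *
  exact fun m hm => hf m (Finset.mem_filter.1 hm).1

theorem weightedHomogeneousComponent_comm (v : σ → ℕ) (c d : ℕ) (f : MvPolynomial σ K) :
    weightedHomogeneousComponent w c (weightedHomogeneousComponent v d f) =
      weightedHomogeneousComponent v d (weightedHomogeneousComponent w c f) := by
  ext m
  simp only [coeff_weightedHomogeneousComponent]
  split_ifs <;> rfl

theorem sum_range_weightedHomogeneousComponent {f : MvPolynomial σ K} {c : ℕ}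
    (hf : f ∈ weightLT K w c) : ∑ k ∈ Finset.range c, weightedHomogeneousComponent w k f = f := by
  ext m
  simp only [coeff_sum, coeff_weightedHomogeneousComponent, Finset.sum_ite_eq, Finset.mem_range,
    ite_eq_left_iff]
  intro hm
  exact (notMem_support_iff.1 fun hms => hm (mem_weightLT.1 hf m hms)).symm

theorem ker_weightedHomogeneousComponent_inf_weightLT (c : ℕ) :
    LinearMap.ker (weightedHomogeneousComponent (R := K) w c) ⊓ weightLT K w (c + 1) =
      weightLT K w c := by
  ext f
  refine ⟨?_, fun hf => ⟨?_, weightLT_mono c.le_succ hf⟩⟩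
  · rintro ⟨hf, hfc⟩
    refine mem_weightLT.2 fun m hm => (Nat.lt_succ_iff.1 (mem_weightLT.1 hfc m hm)).lt_of_ne ?_
    intro hmc
    have hcoeff := congrArg (coeff m) (LinearMap.mem_ker.1 hf)
    rw [coeff_weightedHomogeneousComponent, if_pos hmc] at hcoeff
    exact mem_support_iff.1 hm hcoeff
  · exact weightedHomogeneousComponent_eq_zero' c f fun m hm => (mem_weightLT.1 hf m hm).ne

theorem exists_le_weightLT (U : Submodule K (MvPolynomial σ K)) [FiniteDimensional K U] :
    ∃ c, U ≤ weightLT K w c := by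
  have htop : U ≤ ⨆ c, weightLT K w c := fun f _ =>
    Submodule.mem_iSup_of_mem _ (mem_weightLT_weightedTotalDegree_succ f)
  have hU : IsCompactElement U :=
    (Submodule.fg_iff_compact U).1 (Module.Finite.iff_fg.1 inferInstance)
  obtain ⟨_, ⟨c, rfl⟩, hc⟩ := hU (Set.range (weightLT K w)) _ (Set.range_nonempty _)
    weightLT_mono.directed_le.directedOn_range isLUB_iSup htop
  exact ⟨c, hc⟩

theorem finrank_inf_weightLT_succ (U : Submodule K (MvPolynomial σ K)) [FiniteDimensional K U]
    (c : ℕ) : Module.finrank K ↥(U ⊓ weightLT K w (c + 1)) =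
      Module.finrank K (leadingForms w U c) + Module.finrank K ↥(U ⊓ weightLT K w c) := by
  have hrank := finrank_map_add_finrank_ker_inf (weightedHomogeneousComponent w c)
    (U ⊓ weightLT K w (c + 1))
  rw [inf_left_comm, ker_weightedHomogeneousComponent_inf_weightLT] at hrank
  exact hrank.symm

theorem finrank_eq_of_leadingForms_eq {U V : Submodule K (MvPolynomial σ K)}
    [FiniteDimensional K U] [FiniteDimensional K V]
    (h : ∀ c, leadingForms w U c = leadingForms w V c) :
    Module.finrank K U = Module.finrank K V := by
  have hlt (c : ℕ) :
      Module.finrank K ↥(U ⊓ weightLT K w c) = Module.finrank K ↥(V ⊓ weightLT K w c) := by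
    induction c with
    | zero => rw [weightLT_zero, inf_bot_eq, inf_bot_eq]
    | succ c ih => rw [finrank_inf_weightLT_succ, finrank_inf_weightLT_succ, h, ih]
  obtain ⟨c, hc⟩ := exists_le_weightLT (w := w) (U ⊔ V)
  rw [← inf_eq_left.2 (le_sup_left.trans hc), hlt, inf_eq_left.2 (le_sup_right.trans hc)]

theorem weightedHomogeneousComponent_mem_leadingForms {U : Submodule K (MvPolynomial σ K)} {c : ℕ}
    {f : MvPolynomial σ K} (hf : f ∈ U) (hfc : f ∈ weightLT K w (c + 1)) :
    weightedHomogeneousComponent w c f ∈ leadingForms w U c :=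
  Submodule.mem_map_of_mem ⟨hf, hfc⟩

theorem monomial_mul_weightedHomogeneousComponent (u : σ →₀ ℕ) (a : K) (c : ℕ)
    (f : MvPolynomial σ K) :
    monomial u a * weightedHomogeneousComponent w c f =
      weightedHomogeneousComponent w (Finsupp.weight w u + c) (monomial u a * f) := by
  induction f using MvPolynomial.induction_on' with
  | add p q hp hq => simp only [map_add, mul_add, hp, hq]
  | monomial m b =>
    rw [monomial_mul,
      weightedHomogeneousComponent_of_mem (isWeightedHomogeneous_monomial w m b rfl),
      weightedHomogeneousComponent_of_mem (isWeightedHomogeneous_monomial w (u + m) (a * b) rfl)]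
    simp only [map_add, add_right_inj, mul_ite, mul_zero, monomial_mul]

theorem monomial_mul_mem_weightLT {c : ℕ} {f : MvPolynomial σ K} (hf : f ∈ weightLT K w c)
    (u : σ →₀ ℕ) (a : K) : monomial u a * f ∈ weightLT K w (Finsupp.weight w u + c) := by
  classical
  rw [mem_weightLT] at *
  intro m hm
  obtain ⟨u', hu', v, hv, rfl⟩ := Finset.mem_add.1 (support_mul _ _ hm)
  rw [Finset.mem_singleton.1 (support_monomial_subset hu'), map_add]
  exact Nat.add_lt_add_left (hf v hv) _

theorem mul_mem_iSup_leadingForms (I : Ideal (MvPolynomial σ K)) (s : MvPolynomial σ K)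
    {x : MvPolynomial σ K} (hx : x ∈ ⨆ c, leadingForms w (I.restrictScalars K) c) :
    s * x ∈ ⨆ c, leadingForms w (I.restrictScalars K) c := by
  induction s using MvPolynomial.induction_on' with
  | add p q hp hq =>
    rw [add_mul]
    exact add_mem hp hq
  | monomial u a =>
    suffices hle : ⨆ c, leadingForms w (I.restrictScalars K) c ≤
        (⨆ c, leadingForms w (I.restrictScalars K) c).comap
          (LinearMap.mulLeft K (monomial u a)) from hle hx
    refine iSup_le fun c => ?_
    rintro _ ⟨f, ⟨hf, hfc⟩, rfl⟩
    rw [Submodule.mem_comap, LinearMap.mulLeft_apply, monomial_mul_weightedHomogeneousComponent]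
    exact Submodule.mem_iSup_of_mem _ <| weightedHomogeneousComponent_mem_leadingForms
      (I.mul_mem_left _ hf) (monomial_mul_mem_weightLT hfc u a)

theorem weightedHomogeneousComponent_mem_of_mem_iSup_leadingForms
    {U : Submodule K (MvPolynomial σ K)} {x : MvPolynomial σ K} (hx : x ∈ ⨆ c, leadingForms w U c)
    (c : ℕ) : weightedHomogeneousComponent w c x ∈ leadingForms w U c := by
  suffices hle : ⨆ c, leadingForms w U c ≤
      (leadingForms w U c).comap (weightedHomogeneousComponent w c) from hle hx
  refine iSup_le fun k => ?_
  rintro _ ⟨f, hf, rfl⟩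
  rw [Submodule.mem_comap, weightedHomogeneousComponent_of_mem
    (weightedHomogeneousComponent_isWeightedHomogeneous k f)]
  split_ifs with hck
  · subst hck
    exact Submodule.mem_map_of_mem hf
  · exact zero_mem _

end LeadingForms

section InitialIdeal

variable {K n} {w : Fin n → ℕ} {I : Ideal (PS K n)}

theorem wdeg_eq_weight (w : Fin n → ℕ) : wdeg n w = Finsupp.weight w := by
  ext m
  rw [wdeg, Finsupp.weight_apply, Finsupp.sum_fintype _ _ fun i => zero_smul ℕ (w i)]
  simp only [smul_eq_mul, mul_comm]

theorem initialForm_eq_weightedHomogeneousComponent (f : PS K n) :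
    initialForm K n w f = weightedHomogeneousComponent w (weightedTotalDegree w f) f := by
  rw [initialForm, wdeg_eq_weight, weightedHomogeneousComponent_apply]
  rfl

theorem weightedHomogeneousComponent_mem_initialIdealW {f : PS K n} (hf : f ∈ I) {c : ℕ}
    (hfc : f ∈ weightLT K w (c + 1)) :
    weightedHomogeneousComponent w c f ∈ initialIdealW K n w I := by
  by_cases h : weightedHomogeneousComponent w c f = 0
  · rw [h]
    exact zero_mem _
  · suffices hc : weightedTotalDegree w f = c by
      rw [← hc, ← initialForm_eq_weightedHomogeneousComponent]
      exact Ideal.subset_span ⟨f, hf, rfl⟩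
    obtain ⟨m, hm⟩ := support_nonempty.2 h
    rw [support_weightedHomogeneousComponent, Finset.mem_filter] at hm
    exact le_antisymm (Finset.sup_le fun m hm => Nat.lt_succ_iff.1 (mem_weightLT.1 hfc m hm))
      (hm.2 ▸ le_weightedTotalDegree w hm.1)

theorem restrictScalars_initialIdealW (w : Fin n → ℕ) (I : Ideal (PS K n)) :
    (initialIdealW K n w I).restrictScalars K =
      ⨆ c, leadingForms w (I.restrictScalars K) c := by
  refine le_antisymm (fun x hx => ?_) (iSup_le fun c => ?_)
  · induction (hx : x ∈ Ideal.span _) using Submodule.span_induction with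
    | mem x hx =>
      obtain ⟨f, hf, rfl⟩ := hx
      rw [initialForm_eq_weightedHomogeneousComponent]
      exact Submodule.mem_iSup_of_mem _ <| weightedHomogeneousComponent_mem_leadingForms hf
        (mem_weightLT_weightedTotalDegree_succ f)
    | zero => exact zero_mem _
    | add x y _ _ hx hy => exact add_mem hx hy
    | smul s x _ hx => exact mul_mem_iSup_leadingForms I s hx
  · rintro _ ⟨f, ⟨hf, hfc⟩, rfl⟩
    exact weightedHomogeneousComponent_mem_initialIdealW hf hfc

theorem isHomog_initialIdealW (w : Fin n → ℕ) (hI : IsHomog K n I) :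
    IsHomog K n (initialIdealW K n w I) := by
  intro x hx d
  rw [← Submodule.restrictScalars_mem K, restrictScalars_initialIdealW] at hx
  suffices hle : ⨆ c, leadingForms w (I.restrictScalars K) c ≤
      ((initialIdealW K n w I).restrictScalars K).comap (homogeneousComponent d) from hle hx
  refine iSup_le fun c => ?_
  rintro _ ⟨f, ⟨hf, hfc⟩, rfl⟩
  rw [Submodule.mem_comap, homogeneousComponent, ← weightedHomogeneousComponent_comm]
  exact weightedHomogeneousComponent_mem_initialIdealW (hI f hf d)
    (weightedHomogeneousComponent_mem_weightLT_of_mem hfc d)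

theorem weightedHomogeneousComponent_mem_polyGrade {f : PS K n} {d : ℤ} (hf : f ∈ polyGrade K n d)
    (c : ℕ) : weightedHomogeneousComponent w c f ∈ polyGrade K n d := by
  rw [mem_polyGrade_iff, support_weightedHomogeneousComponent] at *
  exact fun m hm => hf m (Finset.mem_filter.1 hm).1

theorem leadingForms_idealPart_le (I : Ideal (PS K n)) (c : ℕ) (d : ℤ) :
    leadingForms w (idealPart I d) c ≤ idealPart (initialIdealW K n w I) d := by
  rintro _ ⟨f, ⟨⟨hfI, hfd⟩, hfc⟩, rfl⟩
  exact ⟨weightedHomogeneousComponent_mem_initialIdealW hfI hfc,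
    weightedHomogeneousComponent_mem_polyGrade hfd c⟩

theorem IsHomog.weightedHomogeneousComponent_mem_leadingForms_idealPart (hI : IsHomog K n I)
    {d : ℤ} {x : PS K n} (hx : x ∈ idealPart (initialIdealW K n w I) d) (c : ℕ) :
    weightedHomogeneousComponent w c x ∈ leadingForms w (idealPart I d) c := by
  obtain ⟨hxI, hxd⟩ := hx
  obtain hd | hd := lt_or_ge d 0
  · rw [SetLike.mem_coe, polyGrade_of_neg hd, Submodule.mem_bot] at hxd
    rw [hxd, map_zero]
    exact zero_mem _
  lift d to ℕ using hd
  rw [SetLike.mem_coe, restrictScalars_initialIdealW] at hxI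
  obtain ⟨f, ⟨hfI, hfc⟩, hfx⟩ := weightedHomogeneousComponent_mem_of_mem_iSup_leadingForms hxI c
  rw [polyGrade_natCast, SetLike.mem_coe, mem_homogeneousSubmodule] at hxd
  have hproj : weightedHomogeneousComponent w c (homogeneousComponent d f) =
      weightedHomogeneousComponent w c x := by
    rw [homogeneousComponent, weightedHomogeneousComponent_comm, hfx,
      ← weightedHomogeneousComponent_comm, hxd.weightedHomogeneousComponent_same]
  rw [← hproj]
  refine weightedHomogeneousComponent_mem_leadingForms ⟨hI f hfI d, ?_⟩
    (weightedHomogeneousComponent_mem_weightLT_of_mem hfc d)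
  rw [polyGrade_natCast]
  exact homogeneousComponent_isHomogeneous d f

theorem IsHomog.leadingForms_idealPart_initialIdealW (hI : IsHomog K n I) (c : ℕ) (d : ℤ) :
    leadingForms w (idealPart (initialIdealW K n w I) d) c =
      leadingForms w (idealPart I d) c := by
  refine le_antisymm ?_ fun y hy => ?_
  · rintro _ ⟨x, ⟨hx, -⟩, rfl⟩
    exact hI.weightedHomogeneousComponent_mem_leadingForms_idealPart hx c
  · refine ⟨y, ⟨leadingForms_idealPart_le I c d hy, ?_⟩, ?_⟩
    all_goals obtain ⟨f, -, rfl⟩ := hy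
    · exact weightedHomogeneousComponent_mem_weightLT f c
    · have hf := weightedHomogeneousComponent_isWeightedHomogeneous (w := w) c f
      exact hf.weightedHomogeneousComponent_same

instance (I : Ideal (PS K n)) (d : ℤ) : FiniteDimensional K (idealPart I d) :=
  have := (isNonnegGrading_polyGrade (K := K) (n := n)).finiteDimensional d
  Submodule.finiteDimensional_of_le inf_le_right

theorem IsHomog.finrank_idealPart_initialIdealW (w : Fin n → ℕ) (hI : IsHomog K n I) (d : ℤ) :
    Module.finrank K (idealPart (initialIdealW K n w I) d) =
      Module.finrank K (idealPart I d) :=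
  finrank_eq_of_leadingForms_eq (w := w) fun c => hI.leadingForms_idealPart_initialIdealW c d

end InitialIdeal

section TorusDegeneration

variable {K n} {w : Fin n → ℕ} {I : Ideal (PS K n)}

/-- The diagonal matrix with entries `l ^ (-w i)`. -/
def torusMatrix (w : Fin n → ℕ) (l : Kˣ) : GL (Fin n) K :=
  Matrix.GeneralLinearGroup.mk'' (Matrix.diagonal fun i => (((l⁻¹ : Kˣ) : K) ^ w i)) <| by
    rw [Matrix.det_diagonal]
    exact isUnit_iff_ne_zero.2 <| Finset.prod_ne_zero_iff.2 fun i _ => pow_ne_zero _ (l⁻¹).ne_zero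

theorem coordChange_torusMatrix_monomial (w : Fin n → ℕ) (l : Kˣ) (m : Fin n →₀ ℕ) (a : K) :
    coordChange K n (torusMatrix w l) (monomial m a) =
      ((l⁻¹ : Kˣ) : K) ^ Finsupp.weight w m • monomial m a := by
  have hX (i : Fin n) :
      coordChange K n (torusMatrix w l) (X i) = C (((l⁻¹ : Kˣ) : K) ^ w i) * X i := by
    rw [coordChange_X, Finset.sum_eq_single i]
    · simp [torusMatrix, smul_eq_C_mul]
    · intro k _ hk
      simp [torusMatrix, Matrix.diagonal_apply_ne _ hk]
    · simp
  rw [monomial_eq, map_mul, algHom_C, algebraMap_eq, Finsupp.prod_fintype _ _ (by simp), map_prod,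
    Finsupp.weight_apply, Finsupp.sum_fintype _ _ (by simp), smul_eq_C_mul]
  simp only [map_pow, hX, mul_pow, Finset.prod_mul_distrib, ← pow_mul, Finset.prod_pow_eq_pow_sum,
    smul_eq_mul, mul_comm (w _)]
  ring

theorem coordChange_torusMatrix_weightedHomogeneousComponent (w : Fin n → ℕ) (l : Kˣ) (k : ℕ)
    (f : PS K n) : coordChange K n (torusMatrix w l) (weightedHomogeneousComponent w k f) =
      ((l⁻¹ : Kˣ) : K) ^ k • weightedHomogeneousComponent w k f := by
  rw [weightedHomogeneousComponent_apply, map_sum, Finset.smul_sum]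
  refine Finset.sum_congr rfl fun m hm => ?_
  rw [coordChange_torusMatrix_monomial, (Finset.mem_filter.1 hm).2]

/-- The family `l ↦ D_{l,w}(I)` of torus translates of `I`, completed by `in_w(I)` at `l = 0`. -/
def torusFamily (w : Fin n → ℕ) (I : Ideal (PS K n)) (l : K) : Ideal (PS K n) :=
  open Classical in
  if h : l = 0 then initialIdealW K n w I
  else I.map (coordChange K n (torusMatrix w (Units.mk0 l h)))

theorem torusFamily_zero (w : Fin n → ℕ) (I : Ideal (PS K n)) :
    torusFamily w I 0 = initialIdealW K n w I :=
  dif_pos rfl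

theorem torusFamily_of_ne_zero (w : Fin n → ℕ) (I : Ideal (PS K n)) {l : K} (h : l ≠ 0) :
    torusFamily w I l = I.map (coordChange K n (torusMatrix w (Units.mk0 l h))) :=
  dif_neg h

theorem isHomog_torusFamily (w : Fin n → ℕ) (hI : IsHomog K n I) (l : K) :
    IsHomog K n (torusFamily w I l) := by
  obtain rfl | hl := eq_or_ne l 0
  · rw [torusFamily_zero]
    exact isHomog_initialIdealW w hI
  · rw [torusFamily_of_ne_zero w I hl]
    exact hI.map_coordChange _

theorem finrank_idealPart_torusFamily (w : Fin n → ℕ) (hI : IsHomog K n I) (l : K) (d : ℤ) :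
    Module.finrank K (idealPart (torusFamily w I l) d) = Module.finrank K (idealPart I d) := by
  obtain rfl | hl := eq_or_ne l 0
  · rw [torusFamily_zero, hI.finrank_idealPart_initialIdealW]
  · rw [torusFamily_of_ne_zero w I hl, finrank_idealPart_map_coordChange]

variable (K) in
/-- The functions on the affine line `K` given by a polynomial. -/
def linePolynomials : Subalgebra K (K → K) :=
  (Polynomial.aeval (R := K) (id : K → K)).range

theorem mem_linePolynomials {F : K → K} :
    F ∈ linePolynomials K ↔ ∃ p : Polynomial K, ∀ l, p.eval l = F l := by
  refine exists_congr fun p => funext_iff.trans <| forall_congr' fun l => ?_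
  have heval := Polynomial.aeval_pi_apply₂ (R := K) (id : K → K) p l
  exact Eq.congr_left (heval.trans (congrFun (Polynomial.coe_aeval_eq_eval l) p))

/-- The section `l ↦ l ^ c • D_{l,w}(f)` through the leading form of `f ∈ weightLT K w (c + 1)`,
written so that it is visibly polynomial in `l`. -/
def torusSection (w : Fin n → ℕ) (c : ℕ) (f : PS K n) (l : K) : PS K n :=
  ∑ k ∈ Finset.range (c + 1), l ^ (c - k) • weightedHomogeneousComponent w k f

theorem torusSection_zero (c : ℕ) (f : PS K n) :
    torusSection w c f 0 = weightedHomogeneousComponent w c f := by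
  rw [torusSection, Finset.sum_range_succ, Nat.sub_self, pow_zero, one_smul, add_eq_right]
  refine Finset.sum_eq_zero fun k hk => ?_
  rw [zero_pow (Nat.sub_ne_zero_of_lt (Finset.mem_range.1 hk)), zero_smul]

theorem torusSection_of_ne_zero {c : ℕ} {f : PS K n} (hf : f ∈ weightLT K w (c + 1)) {l : K}
    (hl : l ≠ 0) :
    torusSection w c f l = l ^ c • coordChange K n (torusMatrix w (Units.mk0 l hl)) f := by
  conv_rhs => rw [← sum_range_weightedHomogeneousComponent hf, map_sum, Finset.smul_sum]
  refine Finset.sum_congr rfl fun k hk => ?_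
  rw [coordChange_torusMatrix_weightedHomogeneousComponent, smul_smul, Units.val_inv_eq_inv_val,
    Units.val_mk0, inv_pow, pow_sub₀ l hl (Nat.lt_succ_iff.1 (Finset.mem_range.1 hk))]

theorem torusSection_mem_regularSections {c : ℕ} {d : ℤ} {f : PS K n} (hf : f ∈ idealPart I d)
    (hfc : f ∈ weightLT K w (c + 1)) :
    torusSection w c f ∈
      regularSections (linePolynomials K) fun l => idealPart (torusFamily w I l) d := by
  refine mem_regularSections.2 ⟨fun φ => mem_linePolynomials.2
    ⟨∑ k ∈ Finset.range (c + 1), Polynomial.C (φ (weightedHomogeneousComponent w k f)) *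
      Polynomial.X ^ (c - k), fun l => ?_⟩, fun l => ?_⟩
  · simp only [torusSection, Polynomial.eval_finsetSum, Polynomial.eval_mul, Polynomial.eval_C,
      Polynomial.eval_pow, Polynomial.eval_X, map_sum, map_smul, smul_eq_mul, mul_comm]
  · obtain rfl | hl := eq_or_ne l 0
    · rw [torusSection_zero, torusFamily_zero]
      exact leadingForms_idealPart_le I c d (weightedHomogeneousComponent_mem_leadingForms hf hfc)
    · rw [torusSection_of_ne_zero hfc hl, torusFamily_of_ne_zero w I hl,
        ← map_coordChange_idealPart]
      exact Submodule.smul_mem _ _ (Submodule.mem_map_of_mem hf)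

theorem isFlatFamily_torusFamily (w : Fin n → ℕ) (hI : IsHomog K n I) :
    IsFlatFamily (linePolynomials K) 0 (torusFamily w I) where
  isHomog := isHomog_torusFamily w hI
  finrank_idealPart l d := by simp only [finrank_idealPart_torusFamily w hI]
  isRegularFamily d := by
    rintro x (hx : x ∈ idealPart (torusFamily w I 0) d)
    rw [torusFamily_zero] at hx
    rw [← sum_range_weightedHomogeneousComponent (mem_weightLT_weightedTotalDegree_succ (w := w) x)]
    refine Submodule.sum_mem _ fun c _ => ?_
    obtain ⟨f, ⟨hf, hfc⟩, hfx⟩ := hI.weightedHomogeneousComponent_mem_leadingForms_idealPart hx c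
    exact ⟨torusSection w c f, torusSection_mem_regularSections hf hfc,
      (torusSection_zero c f).trans hfx⟩

theorem exists_torQQ_map_coordChange_le [Infinite K] {J : Ideal (PS K n)} (w w' : Fin n → ℕ)
    (hI : IsHomog K n I) (hJ : IsHomog K n J) (j : ℤ) : ∃ g : GL (Fin n) K, ∀ i,
      torQQ K n I (J.map (coordChange K n g)) i j ≤
        torQQ K n (initialIdealW K n w I) (initialIdealW K n w' J) i j := by
  obtain ⟨F, hFP, hF₀, hF⟩ :=
    (isFlatFamily_torusFamily w hI).exists_torQQ_le (isFlatFamily_torusFamily w' hJ) j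
  obtain ⟨p, hp⟩ := mem_linePolynomials.1 hFP
  have hp₀ : p ≠ 0 := by
    rintro rfl
    exact hF₀ ((hp 0).symm.trans Polynomial.eval_zero)
  obtain ⟨l, hl⟩ := Polynomial.exists_eval_ne_zero_of_natDegree_lt_card (p * Polynomial.X)
    (mul_ne_zero hp₀ Polynomial.X_ne_zero)
    (Cardinal.natCast_lt_aleph0.trans_le (Cardinal.aleph0_le_mk K))
  rw [Polynomial.eval_mul, Polynomial.eval_X] at hl
  have hl₀ : l ≠ 0 := right_ne_zero_of_mul hl
  refine ⟨(torusMatrix w (Units.mk0 l hl₀))⁻¹ * torusMatrix w' (Units.mk0 l hl₀), fun i => ?_⟩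
  rw [← torQQ_map_coordChange (torusMatrix w (Units.mk0 l hl₀)), ← map_coordChange_mul,
    mul_inv_cancel_left, ← torusFamily_of_ne_zero, ← torusFamily_of_ne_zero, ← torusFamily_zero w I,
    ← torusFamily_zero w' J]
  exact hF l (hp l ▸ left_ne_zero_of_mul hl) i

end TorusDegeneration

/-- **Proposition 2.6(i)** (Caviglia–Murai): fix `j`, homogeneous ideals `I, J ⊆ S` and
weights `w, w' ∈ ℤ_{≥0}^n`.  For a general change of coordinates `g ∈ GL_n(K)`,
`dim_K Tor_i(S/I, S/g(J))_j ≤ dim_K Tor_i(S/in_w(I), S/in_{w'}(J))_j` for all `i`. -/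
theorem tor_dim_general_le_initial_weights_quotients [Infinite K] (j : ℤ)
    (w w' : Fin n → ℕ) (I J : Ideal (PS K n)) (hI : IsHomog K n I) (hJ : IsHomog K n J) :
    generally K n (fun g => ∀ i : ℕ,
      torQQ K n I (Ideal.map (coordChange K n g) J) i j ≤
        torQQ K n (initialIdealW K n w I) (initialIdealW K n w' J) i j) := by
  obtain ⟨g₀, hg₀⟩ := exists_torQQ_map_coordChange_le w w' hI hJ j
  obtain ⟨F, hF₀, hF⟩ := generally_torQQ_map_coordChange_le hI hJ g₀ j
  exact ⟨F, hF₀, fun g hg i => (hF g hg i).trans (hg₀ i)⟩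

end
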